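/- Let n, k ≥ 1, N = n+k ≥ 3, and let q be an indeterminate. Consider the operators u_1,…,u_N acting both on F_k (basis W_{k,N}, k particles) and on F_n (basis W_{n,N}, n particles), defined by the same formulas. Then for all λ, μ, ρ ∈ 𝔓_{≤k,n} one has the level-rank duality ⟨w(ρ), s_λ(𝒰)·w(μ)⟩_{F_k} = ⟨w(ρ^t), s_{λ^t}(𝒰)·w(μ^t)⟩_{F_n} as elements of ℂ[q], where λ^t, μ^t, ρ^t ∈ 𝔓_{≤n,k} and w(·) on the right denotes the 01-word in W_{n,N} associated to a partition in 𝔓_{≤n,k}. -/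

import Mathlib

noncomputable section

open scoped BigOperators

/-- `𝔓_{≤r,c}`: partitions with at most `r` parts, each part at most `c`. -/
abbrev PartBox (r c : ℕ) :=
  {f : Fin r → Fin (c + 1) // ∀ i j : Fin r, i ≤ j → (f j : ℕ) ≤ (f i : ℕ)}

/-- The parts of a partition, as natural numbers. -/
def partVal {r c : ℕ} (σ : PartBox r c) (i : Fin r) : ℕ := (σ.1 i : ℕ)

/-- `|σ|`, the number of boxes. -/
def partSum {r c : ℕ} (σ : PartBox r c) : ℕ := ∑ i, partVal σ i

/-- A tuple of parts, padded by zeros. -/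
def padded {r : ℕ} (f : Fin r → ℕ) (t : ℕ) : ℕ := if h : t < r then f ⟨t, h⟩ else 0

/-- The transpose partition: `(transpGen μ c) j = μ^t_{j+1} = #{i | μ_i ≥ j+1}`. -/
def transpGen {r : ℕ} (μ : Fin r → ℕ) (c : ℕ) : Fin c → ℕ :=
  fun j => (Finset.univ.filter fun i : Fin r => (j : ℕ) + 1 ≤ μ i).card

/-- `I^{(m)}(τ)_j = (m+1)/2 + τ_{m+1-j} - (m+1-j)` (1-based `j`), as a rational number. -/
def Imap (m : ℕ) (τ : Fin m → ℕ) (j : Fin m) : ℚ :=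
  ((m : ℚ) + 1) / 2 + (τ j.rev : ℚ) - ((m : ℚ) - (j : ℚ))

/-- `ζ^t = exp(2πι t/N)` for rational exponents `t`. -/
def zeta (N : ℕ) (t : ℚ) : ℂ :=
  Complex.exp (2 * Real.pi * Complex.I * (t : ℂ) / (N : ℂ))

/-- Elementary symmetric polynomial `e_r(x)` of a tuple of complex numbers. -/
def eC {m : ℕ} (x : Fin m → ℂ) (r : ℤ) : ℂ :=
  if 0 ≤ r then ∑ I ∈ Finset.powersetCard r.toNat (Finset.univ : Finset (Fin m)), ∏ i ∈ I, x i
  else 0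

/-- Complete homogeneous symmetric polynomial `h_r(x)` of a tuple of complex numbers. -/
def hC {m : ℕ} (x : Fin m → ℂ) (r : ℤ) : ℂ :=
  if 0 ≤ r then
    ∑ p ∈ (Fintype.piFinset fun _ : Fin m => Finset.range (r.toNat + 1)).filter
        (fun p => ∑ i, p i = r.toNat),
      ∏ i, x i ^ p i
  else 0

/-- The Schur polynomial `s_λ(x) = det(h_{λ_i-i+j}(x))_{1 ≤ i,j ≤ m}`. -/
def schurC {m : ℕ} (x : Fin m → ℂ) (lam : Fin m → ℕ) : ℂ :=
  (Matrix.of fun i j : Fin m => hC x ((lam i : ℤ) - (i : ℕ) + (j : ℕ))).det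

/-- A canonical "gap" of a proper subset `I ⊊ ℤ/Nℤ`. -/
def zgap {N : ℕ} [NeZero N] (I : Finset (ZMod N)) : ZMod N :=
  if h : ((Finset.univ \ I).image ZMod.val).Nonempty then
    ((((Finset.univ \ I).image ZMod.val).min' h : ℕ) : ZMod N)
  else 0

/-- Cyclically increasing ordered product: `u_i` stands to the left of `u_{i+1}`. -/
def cycProdAsc {N : ℕ} [NeZero N] {A : Type*} [Monoid A] (u : ZMod N → A)
    (I : Finset (ZMod N)) : A :=
  ((List.range N).map fun t =>
    if zgap I + 1 + (t : ZMod N) ∈ I then u (zgap I + 1 + (t : ZMod N)) else 1).prod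

/-- Cyclically decreasing ordered product: `u_{i+1}` stands to the left of `u_i`. -/
def cycProdDesc {N : ℕ} [NeZero N] {A : Type*} [Monoid A] (u : ZMod N → A)
    (I : Finset (ZMod N)) : A :=
  ((List.range N).map fun t =>
    if zgap I - 1 - (t : ZMod N) ∈ I then u (zgap I - 1 - (t : ZMod N)) else 1).prod

/-- The determinant of a square matrix over a (possibly noncommutative) ring, expanded via
the Leibniz formula. -/
def ncDet {A : Type*} [Ring A] {r : ℕ} (M : Fin r → Fin r → A) : A :=
  ∑ σ : Equiv.Perm (Fin r),
    ((Equiv.Perm.sign σ : ℤ) : A) * ((List.finRange r).map fun i => M (σ i) i).prod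

/-- The free `R`-module with basis the set of 01-words of length `N` (a word is a function
`ℤ/Nℤ → Bool`, the 1-based position `ℓ` being encoded as `ℓ mod N`). -/
abbrev WSp (R : Type*) [CommRing R] (N : ℕ) := (ZMod N → Bool) →₀ R

/-- The 01-word `w(λ) ∈ W_{k,N}` of a partition `λ ∈ 𝔓_{≤k,n}`: the 1-letters occupy the
positions `ℓ_i = λ_{k+1-i} + i`, `i = 1, …, k`. -/
def wordOf (N k : ℕ) (lam : Fin k → ℕ) : ZMod N → Bool :=
  fun p => decide (∃ i : Fin k, p = ((lam i.rev + (i : ℕ) + 1 : ℕ) : ZMod N))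

/-- The hopping operator `u_c` (for `c = i mod N` this is the operator `u_i`, `1 ≤ i ≤ N`):
it moves a particle from position `c` to position `c+1` when possible (sends the word to 0
otherwise), with the extra factor `q` for `u_N` (i.e. `c = 0`). -/
def uOp (R : Type*) [CommRing R] (N : ℕ) [NeZero N] (q : R) (c : ZMod N) :
    Module.End R (WSp R N) :=
  Finsupp.lift (WSp R N) R (ZMod N → Bool) fun w =>
    if w c = true ∧ w (c + 1) = false then
      Finsupp.single (w ∘ (Equiv.swap c (c + 1))) (if c = 0 then q else 1)
    else 0

/-- The noncommutative elementary symmetric polynomials `e_t(𝒰)`, with the conventions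
`e_0 = id` and `e_t = 0` for `t < 0`. -/
def eUInt (R : Type*) [CommRing R] (N : ℕ) [NeZero N] (q : R) (t : ℤ) :
    Module.End R (WSp R N) :=
  if t = 0 then 1
  else if 1 ≤ t ∧ t ≤ (N : ℤ) - 1 then
    ∑ I ∈ Finset.powersetCard t.toNat (Finset.univ : Finset (ZMod N)),
      cycProdAsc (uOp R N q) I
  else 0

/-- The noncommutative complete symmetric polynomial `h_r(𝒰)`. -/
def hUOp (R : Type*) [CommRing R] (N : ℕ) [NeZero N] (q : R) (r : ℕ) :
    Module.End R (WSp R N) :=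
  ∑ I ∈ Finset.powersetCard r (Finset.univ : Finset (ZMod N)), cycProdDesc (uOp R N q) I

/-- The noncommutative Schur polynomial
`s_λ(𝒰) = det(e_{λ^t_i - i + j}(𝒰))_{1 ≤ i,j ≤ λ_1}` of a partition given by its parts. -/
def sUOp (R : Type*) [CommRing R] (N : ℕ) [NeZero N] (q : R) {r : ℕ} (lam : Fin r → ℕ) :
    Module.End R (WSp R N) :=
  ncDet fun i j : Fin (padded lam 0) =>
    eUInt R N q ((transpGen lam (padded lam 0) i : ℤ) - ((i : ℕ) : ℤ) + ((j : ℕ) : ℤ))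

/-- The `R`-bilinear pairing on the word space making the basis of words orthonormal. -/
def pairW {R : Type*} [CommRing R] {N : ℕ} [NeZero N] (f g : WSp R N) : R :=
  ∑ w : ZMod N → Bool, f w * g w


/-! Part 1: cyclic products -/

def ascG {N : ℕ} {A : Type*} [Monoid A] (u : ZMod N → A) (g : ZMod N)
    (I : Finset (ZMod N)) : A :=
  ((List.range N).map fun t : ℕ =>
    if g + 1 + (t : ZMod N) ∈ I then u (g + 1 + (t : ZMod N)) else 1).prod

theorem cycProdAsc_eq {N : ℕ} [NeZero N] {A : Type*} [Monoid A] (u : ZMod N → A)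
    (I : Finset (ZMod N)) : cycProdAsc u I = ascG u (zgap I) I := by
  unfold cycProdAsc ascG
  congr 1
  simp only [List.bind_eq_flatMap, List.pure_def, List.flatMap_singleton', List.map_flatMap]
  generalize List.range N = l
  induction l with
  | nil => rfl
  | cons a l ih => simpa using ih

theorem zgap_not_mem {N : ℕ} [NeZero N] (I : Finset (ZMod N)) (hI : I ≠ Finset.univ) :
    zgap I ∉ I := by
  have h : ((Finset.univ \ I).image ZMod.val).Nonempty := by
    rw [Finset.image_nonempty, Finset.sdiff_nonempty]
    intro h
    exact hI (Finset.univ_subset_iff.mp h)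
  have h2 := Finset.min'_mem _ h
  obtain ⟨x, hx, hx2⟩ := Finset.mem_image.mp h2
  unfold zgap
  rw [dif_pos h, ← hx2, ZMod.natCast_zmod_val]
  simpa using hx

theorem cast_ne_zero_of_lt {N m : ℕ} (h0 : 0 < m) (h1 : m < N) : (m : ZMod N) ≠ 0 := by
  intro h
  rw [ZMod.natCast_eq_zero_iff] at h
  exact absurd (Nat.le_of_dvd h0 h) (by omega)

theorem ascG_gap {N : ℕ} [NeZero N] {A : Type*} [Monoid A] (u : ZMod N → A)
    (hc : ∀ x y : ZMod N, y ≠ x → y ≠ x + 1 → x ≠ y + 1 → Commute (u x) (u y))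
    (g g' : ZMod N) (I : Finset (ZMod N)) (hg : g ∉ I) (hg' : g' ∉ I) :
    ascG u g I = ascG u g' I := by
  obtain ⟨d, hd, rfl⟩ : ∃ d : ℕ, d < N ∧ g' = g + d :=
    ⟨(g' - g).val, ZMod.val_lt _, by rw [ZMod.natCast_zmod_val]; ring⟩
  have e1 : List.range N = List.range d ++ (List.range (N - d)).map (d + ·) := by
    rw [← List.range_add]; congr 1; omega
  have e2 : List.range N = List.range (N - d) ++ (List.range d).map ((N - d) + ·) := by
    rw [← List.range_add]; congr 1; omega
  have hNd : ((N - d : ℕ) : ZMod N) = - (d : ZMod N) := by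
    rw [Nat.cast_sub hd.le]; simp
  unfold ascG
  conv_lhs => rw [e1]
  conv_rhs => rw [e2]
  simp only [List.map_append, List.prod_append, List.map_map]
  have f1 : ((fun t : ℕ => if g + 1 + (t : ZMod N) ∈ I then u (g + 1 + (t : ZMod N)) else 1) ∘
      (d + ·)) = (fun t : ℕ => if g + d + 1 + (t : ZMod N) ∈ I then
        u (g + d + 1 + (t : ZMod N)) else 1) := by
    funext t
    simp only [Function.comp, Nat.cast_add]
    have : g + 1 + ((d : ZMod N) + t) = g + d + 1 + t := by ring
    rw [this]
  have f2 : ((fun t : ℕ => if g + d + 1 + (t : ZMod N) ∈ I then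
        u (g + d + 1 + (t : ZMod N)) else 1) ∘ (N - d + ·)) =
      (fun t : ℕ => if g + 1 + (t : ZMod N) ∈ I then u (g + 1 + (t : ZMod N)) else 1) := by
    funext t
    simp only [Function.comp, Nat.cast_add, hNd]
    have : g + d + 1 + (-(d : ZMod N) + t) = g + 1 + t := by ring
    rw [this]
  rw [f1, f2]
  refine Commute.list_prod_left _ _ fun x hx => Commute.list_prod_right _ _ fun y hy => ?_
  simp only [List.mem_map, List.mem_range] at hx hy
  obtain ⟨t, ht, rfl⟩ := hx
  obtain ⟨s, hs, rfl⟩ := hy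
  split_ifs with h1 h2
  · have ht' : t + 1 < d := by
      rcases Nat.lt_or_ge (t + 1) d with h | h
      · exact h
      · exfalso
        have : d = t + 1 := by omega
        apply hg'
        rw [this]; push_cast
        convert h1 using 1; ring
    have hs' : s + 1 < N - d := by
      rcases Nat.lt_or_ge (s + 1) (N - d) with h | h
      · exact h
      · exfalso
        have : s = (N - d) - 1 := by omega
        apply hg
        have e : ((s : ℕ) : ZMod N) = - (d : ZMod N) - 1 := by
          rw [← hNd, this, Nat.cast_sub (by omega)]; simp
        convert h2 using 1; rw [e]; ring
    apply hc
    · intro h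
      apply cast_ne_zero_of_lt (N := N) (m := d + s - t) (by omega) (by omega)
      rw [Nat.cast_sub (by omega)]; push_cast
      linear_combination h
    · intro h
      apply cast_ne_zero_of_lt (N := N) (m := d + s - t - 1) (by omega) (by omega)
      rw [Nat.cast_sub (by omega), Nat.cast_sub (by omega)]; push_cast
      linear_combination h
    · intro h
      apply cast_ne_zero_of_lt (N := N) (m := d + s - t + 1) (by omega) (by omega)
      rw [Nat.cast_add, Nat.cast_sub (by omega)]; push_cast
      linear_combination -h
  all_goals simp

theorem cycProdAsc_gap {N : ℕ} [NeZero N] {A : Type*} [Monoid A] (u : ZMod N → A)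
    (hc : ∀ x y : ZMod N, y ≠ x → y ≠ x + 1 → x ≠ y + 1 → Commute (u x) (u y))
    (g : ZMod N) (I : Finset (ZMod N)) (hg : g ∉ I) :
    cycProdAsc u I = ascG u g I := by
  rw [cycProdAsc_eq]
  apply ascG_gap u hc _ _ _ (zgap_not_mem I _) hg
  rintro rfl
  simp at hg

def cutList (N : ℕ) (g : ZMod N) : List (ZMod N) :=
  (List.range (N - 1)).map fun t : ℕ => g + 1 + (t : ZMod N)

theorem cutList_nodup (N : ℕ) (g : ZMod N) : (cutList N g).Nodup := by
  unfold cutList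
  refine List.Nodup.map_on ?_ List.nodup_range
  intro x hx y hy h
  simp only [List.mem_range] at hx hy
  have h' : (x : ZMod N) = y := by linear_combination h
  rw [ZMod.natCast_eq_natCast_iff'] at h'
  rwa [Nat.mod_eq_of_lt (by omega), Nat.mod_eq_of_lt (by omega)] at h'

theorem cutList_toFinset (N : ℕ) [NeZero N] (g : ZMod N) :
    (cutList N g).toFinset = Finset.univ.erase g := by
  have hN : 0 < N := Nat.pos_of_ne_zero (NeZero.ne N)
  apply Finset.eq_of_subset_of_card_le
  · intro x hx
    simp only [cutList, List.mem_toFinset, List.mem_map, List.mem_range] at hx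
    obtain ⟨t, ht, rfl⟩ := hx
    simp only [Finset.mem_erase, Finset.mem_univ, and_true]
    intro h
    apply cast_ne_zero_of_lt (N := N) (m := t + 1) (by omega) (by omega)
    push_cast
    linear_combination h
  · rw [List.toFinset_card_of_nodup (cutList_nodup N g), Finset.card_erase_of_mem (by simp)]
    simp [cutList, ZMod.card]

theorem ascG_cut {N : ℕ} [NeZero N] {A : Type*} [Monoid A] (u : ZMod N → A) (g : ZMod N)
    (I : Finset (ZMod N)) (hg : g ∉ I) :
    ascG u g I = ((cutList N g).map fun x => if x ∈ I then u x else 1).prod := by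
  obtain ⟨m, rfl⟩ : ∃ m, N = m + 1 := ⟨N - 1, by have := NeZero.ne N; omega⟩
  have : g + 1 + (m : ZMod (m+1)) = g := by
    have h : ((m + 1 : ℕ) : ZMod (m+1)) = 0 := ZMod.natCast_self _
    push_cast at h
    linear_combination h
  unfold ascG cutList
  rw [List.range_succ]
  simp [this, hg, Function.comp_def]

theorem ascG_neg_cut {N : ℕ} [NeZero N] {A : Type*} [Monoid A] (u : ZMod N → A) (g : ZMod N)
    (I : Finset (ZMod N)) (hg : g ∉ I) :
    ascG (fun x => u (-x)) (-g) (I.map (Equiv.neg _).toEmbedding) =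
      ((cutList N g).reverse.map fun x => if x ∈ I then u x else 1).prod := by
  rw [ascG_cut]
  · have : (cutList N g).reverse = (cutList N (-g)).map (fun x => -x) := by
      unfold cutList
      apply List.ext_getElem
      · simp
      · intro i h1 h2
        simp only [List.getElem_reverse, List.getElem_map, List.getElem_range, List.length_map,
          List.length_range]
        simp only [List.length_reverse, List.length_map, List.length_range] at h1
        rw [Nat.cast_sub (by omega), Nat.cast_sub (by omega), Nat.cast_sub (by omega)]
        simp; ring
    rw [this, List.map_map]
    congr 1
    apply List.map_congr_left
    intro x _
    simp
  · simpa using hg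

theorem list_prod_one_add {N : ℕ} {A : Type*} [Ring A] (a : ZMod N → A) (l : List (ZMod N))
    (hl : l.Nodup) :
    (l.map fun x => 1 + a x).prod =
      ∑ I ∈ l.toFinset.powerset, (l.map fun x => if x ∈ I then a x else 1).prod := by
  induction l with
  | nil => simp
  | cons b l ih =>
    rw [List.nodup_cons] at hl
    have hb : b ∉ l.toFinset := by simpa using hl.1
    rw [List.map_cons, List.prod_cons, ih hl.2, List.toFinset_cons, Finset.sum_powerset_insert hb,
      add_mul, one_mul, Finset.mul_sum]
    congr 1
    · apply Finset.sum_congr rfl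
      intro I hI
      have : b ∉ I := fun h => hb (Finset.mem_powerset.mp hI h)
      simp [this]
    · apply Finset.sum_congr rfl
      intro I hI
      simp only [List.map_cons, Finset.mem_insert_self, if_true, List.prod_cons]
      congr 2
      apply List.map_congr_left
      intro x hx
      have : x ≠ b := by rintro rfl; exact hl.1 hx
      simp [this]

theorem list_telescope {N : ℕ} {A : Type*} [Ring A] (a b : ZMod N → A)
    (h : ∀ x, a x * b x = 1) (l : List (ZMod N)) :
    (l.map a).prod * (l.reverse.map b).prod = 1 := by
  induction l with
  | nil => simp
  | cons c l ih =>
    simp only [List.map_cons, List.prod_cons, List.reverse_cons, List.map_append,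
      List.prod_append, List.map_nil, List.prod_nil, mul_one]
    calc _ = a c * ((l.map a).prod * (l.reverse.map b).prod) * b c := by simp only [mul_assoc]
      _ = 1 := by rw [ih, mul_one, h]

theorem list_monomial {N : ℕ} {A : Type*} [Ring A] (G I : Finset (ZMod N)) (u : ZMod N → A)
    (l : List (ZMod N)) (hl : l.Nodup) (hI : I ⊆ l.toFinset) :
    (l.map fun x => if x ∈ I then (if x ∈ G then Polynomial.monomial 1 (u x) else 0) else 1).prod =
      if I ⊆ G then Polynomial.monomial I.card ((l.map fun x => if x ∈ I then u x else 1).prod)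
      else 0 := by
  induction l generalizing I with
  | nil =>
    have : I = ∅ := by simpa using hI
    subst this
    simp
  | cons b l ih =>
    rw [List.nodup_cons] at hl
    have key : ∀ {B : Type _} (f : ZMod N → B) (o : B),
        (l.map fun x => if x ∈ I then f x else o) =
        (l.map fun x => if x ∈ I.erase b then f x else o) := by
      intro B f o
      apply List.map_congr_left
      intro x hx
      have : x ≠ b := by rintro rfl; exact hl.1 hx
      simp [this]
    have hsub : I.erase b ⊆ l.toFinset := by
      intro x hx
      rw [Finset.mem_erase] at hx
      have := hI hx.2
      simp only [List.toFinset_cons, Finset.mem_insert] at this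
      tauto
    rw [List.map_cons, List.map_cons, List.prod_cons, List.prod_cons, key, key, ih _ hl.2 hsub]
    by_cases hb : b ∈ I
    · have hcard : I.card = 1 + (I.erase b).card := by
        rw [Finset.card_erase_of_mem hb]
        have := Finset.card_pos.mpr ⟨b, hb⟩
        omega
      have hs : I ⊆ G ↔ b ∈ G ∧ I.erase b ⊆ G := by
        rw [← Finset.insert_subset_iff, Finset.insert_erase hb]
      by_cases h1 : b ∈ G <;> by_cases h2 : I.erase b ⊆ G <;>
        simp only [hb, hs, h1, h2, Polynomial.monomial_mul_monomial, if_true, if_false, and_true,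
          and_false, and_self, mul_zero, zero_mul]
      rw [← hcard]
    · have := Finset.erase_eq_of_notMem hb
      simp [hb, this]

section EH

variable {N : ℕ} [NeZero N] {A : Type*} [Ring A] (u : ZMod N → A)

/-- the desc product -/
def descP (J : Finset (ZMod N)) : A :=
  cycProdAsc (fun x => u (-x)) (J.map (Equiv.neg _).toEmbedding)

theorem hc_neg (hc : ∀ x y : ZMod N, y ≠ x → y ≠ x + 1 → x ≠ y + 1 → Commute (u x) (u y)) :
    ∀ x y : ZMod N, y ≠ x → y ≠ x + 1 → x ≠ y + 1 → Commute (u (-x)) (u (-y)) := by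
  intro x y h1 h2 h3
  apply hc
  · simpa using h1
  · intro h; apply h3; linear_combination h
  · intro h; apply h2; linear_combination h

theorem asc_poly (hc : ∀ x y : ZMod N, y ≠ x → y ≠ x + 1 → x ≠ y + 1 → Commute (u x) (u y))
    (G : Finset (ZMod N)) (g : ZMod N) (hg : g ∉ G) :
    ((cutList N g).map fun x => 1 + (if x ∈ G then Polynomial.monomial 1 (u x) else 0)).prod =
      ∑ I ∈ G.powerset, Polynomial.monomial I.card (cycProdAsc u I) := by
  rw [list_prod_one_add _ _ (cutList_nodup N g)]
  have hGs : G ⊆ (cutList N g).toFinset := by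
    rw [cutList_toFinset]
    intro x hx
    simp only [Finset.mem_erase, Finset.mem_univ, and_true]
    rintro rfl; exact hg hx
  rw [← Finset.sum_subset (Finset.powerset_mono.mpr hGs)]
  · apply Finset.sum_congr rfl
    intro I hI
    rw [Finset.mem_powerset] at hI
    rw [list_monomial G I u _ (cutList_nodup N g) (hI.trans hGs), if_pos hI,
      cycProdAsc_gap u hc g I (fun h => hg (hI h)), ascG_cut _ _ _ (fun h => hg (hI h))]
  · intro I hI hI2
    rw [Finset.mem_powerset] at hI hI2
    rw [list_monomial G I u _ (cutList_nodup N g) hI, if_neg hI2]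

theorem desc_poly (hc : ∀ x y : ZMod N, y ≠ x → y ≠ x + 1 → x ≠ y + 1 → Commute (u x) (u y))
    (G : Finset (ZMod N)) (g : ZMod N) (hg : g ∉ G) :
    ((cutList N g).reverse.map fun x =>
        1 + (if x ∈ G then Polynomial.monomial 1 (u x) else 0)).prod =
      ∑ I ∈ G.powerset, Polynomial.monomial I.card (descP u I) := by
  have hnd : (cutList N g).reverse.Nodup := List.nodup_reverse.mpr (cutList_nodup N g)
  rw [list_prod_one_add _ _ hnd]
  have hGs : G ⊆ (cutList N g).reverse.toFinset := by
    rw [List.toFinset_reverse, cutList_toFinset]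
    intro x hx
    simp only [Finset.mem_erase, Finset.mem_univ, and_true]
    rintro rfl; exact hg hx
  rw [← Finset.sum_subset (Finset.powerset_mono.mpr hGs)]
  · apply Finset.sum_congr rfl
    intro I hI
    rw [Finset.mem_powerset] at hI
    rw [list_monomial G I u _ hnd (hI.trans hGs), if_pos hI, descP,
      cycProdAsc_gap _ (hc_neg u hc) (-g) _ (by simpa using (fun h => hg (hI h))),
      ascG_neg_cut _ _ _ (fun h => hg (hI h))]
  · intro I hI hI2
    rw [Finset.mem_powerset] at hI hI2
    rw [list_monomial G I u _ hnd hI, if_neg hI2]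

theorem cycProdAsc_smul_neg (v : ZMod N → A) (J : Finset (ZMod N)) (hJ : J ≠ Finset.univ) :
    cycProdAsc (fun x => - v x) J = (-1) ^ J.card * cycProdAsc v J := by
  have hg := zgap_not_mem J hJ
  rw [cycProdAsc_eq, cycProdAsc_eq, ascG_cut _ _ _ hg, ascG_cut _ _ _ hg]
  have hs : J ⊆ (cutList N (zgap J)).toFinset := by
    rw [cutList_toFinset]
    intro x hx
    simp only [Finset.mem_erase, Finset.mem_univ, and_true]
    rintro rfl; exact hg hx
  have h1 := list_monomial (A := A) Finset.univ J (fun x => - v x) _ (cutList_nodup N (zgap J)) hs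
  have h2 := list_monomial (A := A) Finset.univ J v _ (cutList_nodup N (zgap J)) hs
  have key : ∀ l : List (ZMod N), l.Nodup → ∀ J : Finset (ZMod N), J ⊆ l.toFinset →
      (l.map fun x => if x ∈ J then - v x else 1).prod =
      (-1) ^ J.card * (l.map fun x => if x ∈ J then v x else 1).prod := by
    intro l
    induction l with
    | nil => intro _ J hJ; have : J = ∅ := by simpa using hJ
             subst this; simp
    | cons b l ih =>
      intro hl J hI
      rw [List.nodup_cons] at hl
      have key : ∀ {B : Type _} (f : ZMod N → B) (o : B),
          (l.map fun x => if x ∈ J then f x else o) =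
          (l.map fun x => if x ∈ J.erase b then f x else o) := by
        intro B f o
        apply List.map_congr_left
        intro x hx
        have : x ≠ b := by rintro rfl; exact hl.1 hx
        simp [this]
      have hsub : J.erase b ⊆ l.toFinset := by
        intro x hx
        rw [Finset.mem_erase] at hx
        have := hI hx.2
        simp only [List.toFinset_cons, Finset.mem_insert] at this
        tauto
      rw [List.map_cons, List.map_cons, List.prod_cons, List.prod_cons, key, key,
        ih hl.2 _ hsub]
      by_cases hb : b ∈ J
      · have hcard : J.card = (J.erase b).card + 1 := by
          rw [Finset.card_erase_of_mem hb]
          have := Finset.card_pos.mpr ⟨b, hb⟩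
          omega
        have hcm : Commute ((-1 : A) ^ (J.erase b).card) (v b) :=
          (Commute.neg_one_left _).pow_left _
        simp only [hb, if_true, hcard, pow_succ]
        rw [← mul_assoc, ← mul_assoc]
        congr 1
        rw [mul_neg_one, neg_mul, neg_mul, hcm.eq]
      · have := Finset.erase_eq_of_notMem hb
        simp [hb, this]
  exact key _ (cutList_nodup N _) J hs

theorem eh_local (hc : ∀ x y : ZMod N, y ≠ x → y ≠ x + 1 → x ≠ y + 1 → Commute (u x) (u y))
    (hsq : ∀ x, u x * u x = 0) (G : Finset (ZMod N)) (hG : G ≠ Finset.univ) (r : ℕ) (hr : 1 ≤ r) :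
    ∑ p ∈ (G.powerset ×ˢ G.powerset).filter (fun p => p.1.card + p.2.card = r),
      (-1) ^ p.2.card * (cycProdAsc u p.1 * descP u p.2) = 0 := by
  have hg := zgap_not_mem G hG
  have h1 := asc_poly u hc G _ hg
  have hc' : ∀ x y : ZMod N, y ≠ x → y ≠ x + 1 → x ≠ y + 1 → Commute (- u x) (- u y) := by
    intro x y a b c
    exact ((hc x y a b c).neg_left).neg_right
  have h2 := desc_poly (fun x => - u x) hc' G _ hg
  have h3 := list_telescope
    (fun x => 1 + (if x ∈ G then Polynomial.monomial 1 (u x) else 0))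
    (fun x => 1 + (if x ∈ G then Polynomial.monomial 1 (- u x) else 0)) (by
      intro x
      split_ifs
      · rw [mul_add, add_mul, add_mul, Polynomial.monomial_mul_monomial]
        simp [hsq]
      · simp) (cutList N (zgap G))
  rw [h1, h2, Finset.sum_mul_sum, ← Finset.sum_product'] at h3
  have h4 := congrArg (fun P => Polynomial.coeff P r) h3
  simp only [Polynomial.finsetSum_coeff, Polynomial.monomial_mul_monomial,
    Polynomial.coeff_monomial] at h4
  rw [Polynomial.coeff_one, if_neg (by omega), ← Finset.sum_filter] at h4
  rw [← h4]
  apply Finset.sum_congr rfl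
  intro p hp
  simp only [Finset.mem_filter, Finset.mem_product, Finset.mem_powerset] at hp
  unfold descP
  have hne : (p.2.map (Equiv.neg (ZMod N)).toEmbedding) ≠ Finset.univ := by
    intro h
    have hh := congrArg Finset.card h
    rw [Finset.card_map] at hh
    have := (Finset.card_eq_iff_eq_univ p.2).mp hh
    apply hG
    apply Finset.univ_subset_iff.mp
    rw [← this]; exact hp.1.2
  rw [cycProdAsc_smul_neg (fun x => u (-x)) _ hne, Finset.card_map]
  rw [← mul_assoc, ← mul_assoc]
  congr 1
  exact ((Commute.neg_one_left _).pow_left _).eq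

theorem eh_global (hc : ∀ x y : ZMod N, y ≠ x → y ≠ x + 1 → x ≠ y + 1 → Commute (u x) (u y))
    (hsq : ∀ x, u x * u x = 0) (r : ℕ) (hr : 1 ≤ r) (hrN : r < N) :
    ∑ p ∈ (Finset.univ : Finset (Finset (ZMod N) × Finset (ZMod N))).filter
        (fun p => p.1.card + p.2.card = r),
      (-1) ^ p.2.card * (cycProdAsc u p.1 * descP u p.2) = 0 := by
  set F : Finset (ZMod N) × Finset (ZMod N) → A :=
    fun p => (-1) ^ p.2.card * (cycProdAsc u p.1 * descP u p.2) with hF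
  set f : Finset (ZMod N) → A := fun K =>
    ∑ p ∈ (Finset.univ : Finset (Finset (ZMod N) × Finset (ZMod N))).filter
        (fun p => p.1.card + p.2.card = r ∧ p.1 ∪ p.2 = K), F p with hf
  have hf0 : ∀ K : Finset (ZMod N), K ≠ Finset.univ → f K = 0 := by
    intro K
    induction K using Finset.strongInduction with
    | H K ih =>
      intro hK
      have h1 := eh_local u hc hsq K hK r hr
      have h2 : ∑ K' ∈ K.powerset, f K' =
          ∑ p ∈ (K.powerset ×ˢ K.powerset).filter (fun p => p.1.card + p.2.card = r), F p := by
        rw [← Finset.sum_fiberwise_of_maps_to (s := (K.powerset ×ˢ K.powerset).filter (fun p => p.1.card + p.2.card = r)) (t := K.powerset) (g := fun p : Finset (ZMod N) × Finset (ZMod N) => p.1 ∪ p.2)]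
        · apply Finset.sum_congr rfl
          intro K' hK'
          rw [Finset.mem_powerset] at hK'
          apply Finset.sum_congr _ (fun _ _ => rfl)
          ext p
          simp only [Finset.mem_filter, Finset.mem_univ, true_and, Finset.mem_product,
            Finset.mem_powerset]
          constructor
          · rintro ⟨a, b⟩
            subst b
            exact ⟨⟨⟨Finset.subset_union_left.trans hK', Finset.subset_union_right.trans hK'⟩, a⟩,
              rfl⟩
          · rintro ⟨⟨_, a⟩, b⟩
            exact ⟨a, b⟩
        · intro p hp
          simp only [Finset.mem_filter, Finset.mem_product, Finset.mem_powerset] at hp ⊢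
          exact Finset.union_subset hp.1.1 hp.1.2
      rw [h1] at h2
      rw [Finset.sum_eq_single K] at h2
      · exact h2
      · intro K' hK' hne
        rw [Finset.mem_powerset] at hK'
        apply ih K' (lt_of_le_of_ne hK' hne)
        rintro rfl
        exact hne (le_antisymm hK' (Finset.subset_univ _))
      · simp
  have htot : ∑ K : Finset (ZMod N), f K = ∑ p ∈ (Finset.univ :
      Finset (Finset (ZMod N) × Finset (ZMod N))).filter
        (fun p => p.1.card + p.2.card = r), F p := by
    rw [← Finset.sum_fiberwise_of_maps_to (s := (Finset.univ :
      Finset (Finset (ZMod N) × Finset (ZMod N))).filter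
        (fun p => p.1.card + p.2.card = r)) (t := Finset.univ) (g := fun p : Finset (ZMod N) × Finset (ZMod N) => p.1 ∪ p.2)
      (fun _ _ => Finset.mem_univ _)]
    apply Finset.sum_congr rfl
    intro K' _
    apply Finset.sum_congr _ (fun _ _ => rfl)
    ext p
    simp
  rw [← htot]
  apply Finset.sum_eq_zero
  intro K _
  by_cases hK : K = Finset.univ
  · subst hK
    apply Finset.sum_eq_zero
    intro p hp
    exfalso
    simp only [Finset.mem_filter, Finset.mem_univ, true_and] at hp
    have := Finset.card_union_le p.1 p.2
    rw [hp.2, Finset.card_univ, ZMod.card] at this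
    omega
  · exact hf0 K hK

/-- `e_r` for the family `u`. -/
def eSum (r : ℕ) : A :=
  ∑ I ∈ Finset.powersetCard r (Finset.univ : Finset (ZMod N)), cycProdAsc u I

theorem eSum_neg (r : ℕ) : eSum (fun x => u (-x)) r =
    ∑ I ∈ Finset.powersetCard r (Finset.univ : Finset (ZMod N)), descP u I := by
  unfold eSum descP
  symm
  refine Finset.sum_bij' (fun I _ => I.map (Equiv.neg (ZMod N)).toEmbedding)
    (fun I _ => I.map (Equiv.neg (ZMod N)).toEmbedding) ?_ ?_ ?_ ?_ ?_
  · intro I hI; simpa using hI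
  · intro I hI; simpa using hI
  · intro I hI; ext x; simp
  · intro I hI; ext x; simp
  · intro I hI; rfl

theorem eh_rel (hc : ∀ x y : ZMod N, y ≠ x → y ≠ x + 1 → x ≠ y + 1 → Commute (u x) (u y))
    (hsq : ∀ x, u x * u x = 0) (r : ℕ) (hr : 1 ≤ r) (hrN : r < N) :
    ∑ p ∈ Finset.HasAntidiagonal.antidiagonal r,
      (-1) ^ p.2 * (eSum u p.1 * eSum (fun x => u (-x)) p.2) = 0 := by
  rw [← eh_global u hc hsq r hr hrN]
  rw [← Finset.sum_fiberwise_of_maps_to (t := Finset.HasAntidiagonal.antidiagonal r)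
    (g := fun p : Finset (ZMod N) × Finset (ZMod N) => (p.1.card, p.2.card))]
  · apply Finset.sum_congr rfl
    rintro ⟨a, b⟩ hab
    rw [Finset.HasAntidiagonal.mem_antidiagonal] at hab
    rw [eSum_neg]
    simp only [eSum]
    rw [Finset.sum_mul_sum, ← Finset.sum_product', Finset.mul_sum]
    have : (Finset.powersetCard a (Finset.univ : Finset (ZMod N)) ×ˢ
        Finset.powersetCard b (Finset.univ : Finset (ZMod N))) =
        Finset.filter (fun p : Finset (ZMod N) × Finset (ZMod N) => (p.1.card, p.2.card) = (a, b))
        (Finset.univ.filter (fun p => p.1.card + p.2.card = r)) := by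
      ext p
      simp only [Finset.mem_product, Finset.mem_powersetCard_univ, Finset.mem_filter,
        Finset.mem_univ, true_and, Prod.mk.injEq]
      constructor
      · rintro ⟨h1, h2⟩; exact ⟨by simp only at hab; omega, h1, h2⟩
      · rintro ⟨_, h⟩; exact h
    rw [this]
    apply Finset.sum_congr rfl
    intro p hp
    simp only [Finset.mem_filter, Prod.mk.injEq] at hp
    rw [hp.2.2]
  · intro p hp
    simpa using hp

end EH

/-! Part 2: the hopping operators -/

section Ops

variable (R : Type*) [CommRing R] (N : ℕ) [NeZero N] (q : R)

def wtS (I : Finset (ZMod N)) : R := if (0 : ZMod N) ∈ I then q else 1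

def mvW (w : ZMod N → Bool) (c : ZMod N) : ZMod N → Bool :=
  fun p => if p = c + 1 then true else if p = c then false else w p

variable {N} in
theorem add_one_ne (hN : 2 ≤ N) (c : ZMod N) : c + 1 ≠ c := by
  intro h
  have : ((1 : ℕ) : ZMod N) = 0 := by push_cast; linear_combination h
  exact cast_ne_zero_of_lt (by omega) (by omega) this

variable {N} in
theorem add_two_ne (hN : 3 ≤ N) (c : ZMod N) : c + 1 + 1 ≠ c := by
  intro h
  have : ((2 : ℕ) : ZMod N) = 0 := by push_cast; linear_combination h
  exact cast_ne_zero_of_lt (by omega) (by omega) this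

theorem uOp_single (hN : 2 ≤ N) (c : ZMod N) (w : ZMod N → Bool) (a : R) :
    uOp R N q c (Finsupp.single w a) =
      if w c = true ∧ w (c + 1) = false then
        Finsupp.single (mvW N w c) (a * if c = 0 then q else 1) else 0 := by
  unfold uOp
  simp only [Finsupp.lift_apply, Finsupp.sum_single_index, zero_smul]
  by_cases h : w c = true ∧ w (c + 1) = false
  · have key : w ∘ Equiv.swap c (c + 1) = mvW N w c := by
      funext p
      simp only [mvW, Function.comp]
      by_cases h1 : p = c + 1
      · subst h1; simp [h.1]
      · by_cases h2 : p = c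
        · subst h2; simp [h.2, h1]
        · simp [h1, h2, Equiv.swap_apply_of_ne_of_ne h2 h1]
    rw [if_pos h, if_pos h, key, Finsupp.smul_single, smul_eq_mul]
  · rw [if_neg h, if_neg h, smul_zero]

theorem end_ext {f g : Module.End R (WSp R N)}
    (h : ∀ w, f (Finsupp.single w 1) = g (Finsupp.single w 1)) : f = g := by
  apply Finsupp.lhom_ext
  intro w a
  have : (Finsupp.single w a : WSp R N) = a • Finsupp.single w 1 := by simp
  rw [this, map_smul, map_smul, h]

theorem uOp_sq (hN : 2 ≤ N) (c : ZMod N) : uOp R N q c * uOp R N q c = 0 := by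
  apply end_ext
  intro w
  rw [Module.End.mul_apply, uOp_single R N q hN]
  by_cases h : w c = true ∧ w (c + 1) = false
  · rw [if_pos h, uOp_single R N q hN, if_neg (by simp [mvW])]
    simp
  · rw [if_neg h]; simp

theorem uOp_comm (hN : 3 ≤ N) (x y : ZMod N) (h1 : y ≠ x) (h2 : y ≠ x + 1) (h3 : x ≠ y + 1) :
    Commute (uOp R N q x) (uOp R N q y) := by
  have hN2 : 2 ≤ N := by omega
  apply end_ext
  intro w
  have h4 : y + 1 ≠ x + 1 := by simpa using h1
  have a1 : mvW N w x y = w y := by simp [mvW, h1, h2]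
  have a2 : mvW N w x (y+1) = w (y+1) := by simp [mvW, Ne.symm h3, h4]
  have a3 : mvW N w y x = w x := by simp [mvW, Ne.symm h1, h3]
  have a4 : mvW N w y (x+1) = w (x+1) := by simp [mvW, Ne.symm h2, Ne.symm h4]
  have a5 : mvW N (mvW N w x) y = mvW N (mvW N w y) x := by
    funext p
    simp only [mvW]
    by_cases p1 : p = x
    · subst p1; simp [Ne.symm h1, h3]
    · by_cases p2 : p = y
      · subst p2; simp [h2, h1]
      · simp [p1, p2]
        by_cases p3 : p = x + 1 <;> by_cases p4 : p = y + 1 <;> simp [p3, p4]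
  rw [Module.End.mul_apply, Module.End.mul_apply, uOp_single R N q hN2, uOp_single R N q hN2 x]
  by_cases b1 : w x = true ∧ w (x + 1) = false <;> by_cases b2 : w y = true ∧ w (y+1) = false
  · rw [if_pos b1, if_pos b2, uOp_single R N q hN2, uOp_single R N q hN2, a1, a2, a3, a4,
      if_pos b1, if_pos b2, a5]
    congr 1; ring
  · rw [if_pos b1, if_neg b2, uOp_single R N q hN2, a1, a2, if_neg b2]; simp
  · rw [if_neg b1, if_pos b2, uOp_single R N q hN2, a3, a4, if_neg b1]; simp
  · rw [if_neg b1, if_neg b2]; simp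

def okS (I : Finset (ZMod N)) (w : ZMod N → Bool) : Prop :=
  ∀ i ∈ I, w i = true ∧ (i + 1 ∈ I ∨ w (i + 1) = false)

def resS (I : Finset (ZMod N)) (w : ZMod N → Bool) : ZMod N → Bool :=
  fun p => if p - 1 ∈ I then true else if p ∈ I then false else w p

open Classical in
theorem list_apply (hN : 2 ≤ N) (w : ZMod N → Bool) (l : List (ZMod N))
    (hl : l.Pairwise fun x y => y ≠ x ∧ y + 1 ≠ x) (I : Finset (ZMod N)) (hI : I ⊆ l.toFinset) :
    (l.map fun x => if x ∈ I then uOp R N q x else 1).prod (Finsupp.single w 1) =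
      if okS N I w then Finsupp.single (resS N I w) (wtS R N q I) else 0 := by
  induction l generalizing I with
  | nil =>
    have : I = ∅ := by simpa using hI
    subst this
    have : resS N ∅ w = w := by funext p; simp [resS]
    simp [okS, this, wtS]
  | cons b l ih =>
    rw [List.pairwise_cons] at hl
    obtain ⟨hb1, hl⟩ := hl
    have hbl : b ∉ l := fun h => (hb1 b h).1 rfl
    have key : ∀ {B : Type _} (f : ZMod N → B) (o : B),
        (l.map fun x => if x ∈ I then f x else o) =
        (l.map fun x => if x ∈ I.erase b then f x else o) := by
      intro B f o
      apply List.map_congr_left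
      intro x hx
      have : x ≠ b := by rintro rfl; exact hbl hx
      simp [this]
    have hsub : I.erase b ⊆ l.toFinset := by
      intro x hx
      rw [Finset.mem_erase] at hx
      have := hI hx.2
      simp only [List.toFinset_cons, Finset.mem_insert] at this
      tauto
    rw [List.map_cons, List.prod_cons, key, Module.End.mul_apply, ih hl _ hsub]
    by_cases hb : b ∈ I
    · rw [if_pos hb]
      set I' := I.erase b with hI'
      have m1 : b ∉ I' := by simp [hI']
      have m2 : b - 1 ∉ I' := by
        intro h
        have := hsub h
        rw [List.mem_toFinset] at this
        exact (hb1 _ this).2 (by ring)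
      have m3 : ∀ x, x ∈ I ↔ x = b ∨ x ∈ I' := by
        intro x
        simp only [hI', Finset.mem_erase]
        by_cases hx : x = b <;> simp [hx, hb]
      have hne := add_one_ne hN b
      have m4 : ∀ x ∈ I', x + 1 ≠ b := by
        intro x hx h
        apply m2
        rw [← h]; simpa using hx
      have r1 : resS N I' w b = w b := by simp [resS, m1, m2]
      have r2 : resS N I' w (b + 1) = if b + 1 ∈ I' then false else w (b+1) := by
        simp [resS, m1]
      have hok : okS N I w ↔ okS N I' w ∧ (resS N I' w b = true ∧ resS N I' w (b+1) = false) := by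
        rw [r1, r2]
        constructor
        · intro h
          refine ⟨?_, (h b hb).1, ?_⟩
          · intro i hi
            have h' := h i ((m3 i).mpr (Or.inr hi))
            rw [m3 (i+1)] at h'
            have := m4 i hi
            tauto
          · have h' := (h b hb).2
            rw [m3 (b+1)] at h'
            split_ifs with h2
            · rfl
            · tauto
        · rintro ⟨h1, h2, h3⟩ i hi
          rw [m3] at hi
          rw [m3 (i+1)]
          rcases hi with rfl | hi
          · refine ⟨h2, ?_⟩
            split_ifs at h3 with h4
            · exact Or.inl (Or.inr h4)
            · exact Or.inr h3
          · have := h1 i hi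
            tauto
      by_cases k1 : okS N I' w
      · rw [if_pos k1, uOp_single R N q hN]
        by_cases k2 : resS N I' w b = true ∧ resS N I' w (b+1) = false
        · rw [if_pos k2, if_pos (hok.mpr ⟨k1, k2⟩)]
          have e1 : mvW N (resS N I' w) b = resS N I w := by
            funext p
            by_cases hp : p = b + 1
            · subst hp; simp [mvW, resS, hb]
            · have hp' : p - 1 ≠ b := fun h => hp (by rw [← h]; ring)
              by_cases hp2 : p = b
              · subst hp2
                simp [mvW, resS, hb, m3 (p-1), m2, hp, hp']
              · simp [mvW, resS, hp, hp2, m3 (p - 1), m3 p, hp']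
          have e2 : (wtS R N q I' * if b = 0 then q else 1) = wtS R N q I := by
            unfold wtS
            simp only [m3 0]
            by_cases h0 : b = 0
            · subst h0; simp [m1]
            · simp [h0, Ne.symm h0]
          rw [e1, e2]
        · rw [if_neg k2, if_neg (fun h => k2 (hok.mp h).2)]
      · rw [if_neg k1, if_neg (fun h => k1 (hok.mp h).1), map_zero]
    · rw [if_neg hb, Finset.erase_eq_of_notMem hb]
      rfl

theorem cutList_pairwise (g : ZMod N) :
    (cutList N g).Pairwise fun x y => y ≠ x ∧ y + 1 ≠ x := by
  unfold cutList
  rw [List.pairwise_map]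
  refine List.Pairwise.imp_of_mem (R := (· < ·)) ?_ List.pairwise_lt_range
  intro s t hs ht hst
  rw [List.mem_range] at hs ht
  constructor
  · intro h
    apply cast_ne_zero_of_lt (N := N) (m := t - s) (by omega) (by omega)
    rw [Nat.cast_sub (by omega)]
    linear_combination h
  · intro h
    apply cast_ne_zero_of_lt (N := N) (m := t - s + 1) (by omega) (by omega)
    rw [Nat.cast_add, Nat.cast_sub (by omega)]; push_cast
    linear_combination h

open Classical in
theorem cyc_apply (hN : 2 ≤ N) (w : ZMod N → Bool) (I : Finset (ZMod N))
    (hI : I ≠ Finset.univ) :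
    cycProdAsc (uOp R N q) I (Finsupp.single w 1) =
      if okS N I w then Finsupp.single (resS N I w) (wtS R N q I) else 0 := by
  have hg := zgap_not_mem I hI
  rw [cycProdAsc_eq, ascG_cut _ _ _ hg, list_apply R N q hN w _ (cutList_pairwise N _) I]
  rw [cutList_toFinset]
  intro x hx
  simp only [Finset.mem_erase, Finset.mem_univ, and_true]
  rintro rfl; exact hg hx

/-- local vertex weight -/
def vw {R : Type*} [CommRing R] (a b ci co : Bool) (z : R) : R :=
  if (co = true → b = true) ∧ (ci = true → co = false → b = false) ∧ a = (ci || (b && !co))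
  then (if co = true then z else 1) else 0

variable {R} in
def qw (x : ZMod N) : R := if x = 0 then q else 1

open Classical in
def ampS (I : Finset (ZMod N)) : Matrix (ZMod N → Bool) (ZMod N → Bool) R :=
  Matrix.of fun v w => if okS N I w ∧ resS N I w = v then wtS R N q I else 0

theorem amp_prod (t : R) (I : Finset (ZMod N)) (v w : ZMod N → Bool) :
    t ^ I.card * ampS R N q I v w =
      ∏ x : ZMod N, vw (v x) (w x) (decide (x - 1 ∈ I)) (decide (x ∈ I)) (t * qw N q x) := by
  classical
  by_cases h : okS N I w ∧ resS N I w = v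
  · have e : ∀ x : ZMod N, vw (v x) (w x) (decide (x - 1 ∈ I)) (decide (x ∈ I)) (t * qw N q x) =
        if x ∈ I then t * qw N q x else 1 := by
      intro x
      unfold vw
      rw [if_pos]
      · simp
      · obtain ⟨h1, rfl⟩ := h
        refine ⟨?_, ?_, ?_⟩
        · intro hx; exact (h1 x (by simpa using hx)).1
        · intro hx hx2
          have := (h1 (x-1) (by simpa using hx)).2
          rw [sub_add_cancel] at this
          simp only [decide_eq_false_iff_not] at hx2
          tauto
        · simp only [resS]
          by_cases k1 : x - 1 ∈ I <;> by_cases k2 : x ∈ I <;> simp [k1, k2]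
    rw [Finset.prod_congr rfl (fun x _ => e x), Finset.prod_ite_mem, Finset.univ_inter,
      Finset.prod_mul_distrib, Finset.prod_const]
    simp only [ampS, Matrix.of_apply, if_pos h, qw, wtS, Finset.prod_ite_eq', Finset.prod_ite_eq]
  · simp only [ampS, Matrix.of_apply, if_neg h, mul_zero]
    symm
    by_contra hcon
    apply h
    have hx : ∀ x : ZMod N, (x ∈ I → w x = true) ∧
        (x - 1 ∈ I → x ∉ I → w x = false) ∧
        v x = (decide (x-1 ∈ I) || (w x && !decide (x ∈ I))) := by
      intro x
      by_contra hc
      apply hcon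
      refine Finset.prod_eq_zero (Finset.mem_univ x) ?_
      unfold vw
      rw [if_neg]
      simpa using hc
    refine ⟨?_, ?_⟩
    · intro i hi
      refine ⟨(hx i).1 hi, ?_⟩
      have := (hx (i+1)).2.1
      rw [add_sub_cancel_right] at this
      tauto
    · funext x
      rw [(hx x).2.2]
      simp only [resS]
      by_cases k1 : x - 1 ∈ I <;> by_cases k2 : x ∈ I <;> simp [k1, k2]

end Ops

/-! Part 3: Jacobi-Trudi -/

theorem transp_le {a b : ℕ} (lam : Fin a → ℕ) (j : Fin b) : transpGen lam b j ≤ a := by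
  unfold transpGen
  exact (Finset.card_le_univ _).trans (by simp)

/-- base equivalence: `inl i ↦ a-1-i`, `inr j ↦ a + j` -/
def phiE (a b : ℕ) : Fin a ⊕ Fin b ≃ Fin (a + b) :=
  (Equiv.sumCongr Fin.revPerm (Equiv.refl _)).trans finSumFinEquiv

theorem phiE_inl {a b : ℕ} (i : Fin a) : ((phiE a b (Sum.inl i) : Fin (a+b)) : ℤ) = a - 1 - i := by
  simp [phiE, Fin.val_rev]
  have := i.2
  omega

theorem phiE_inr {a b : ℕ} (j : Fin b) : ((phiE a b (Sum.inr j) : Fin (a+b)) : ℤ) = a + j := by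
  simp [phiE]

theorem exists_psi (a b : ℕ) : ∀ (m : ℕ) (lam : Fin a → ℕ), Antitone lam → (∀ i, lam i ≤ b) →
    ∑ i, lam i = m →
    ∃ psi : Fin a ⊕ Fin b ≃ Fin (a + b),
      (∀ i, ((psi (Sum.inl i) : Fin (a+b)) : ℤ) = lam i + a - 1 - i) ∧
      (∀ j, ((psi (Sum.inr j) : Fin (a+b)) : ℤ) = a + j - transpGen lam b j) ∧
      Equiv.Perm.sign (psi.trans (phiE a b).symm) = (-1) ^ m := by
  intro m
  induction m with
  | zero =>
    intro lam _ _ hs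
    have h0 : ∀ i, lam i = 0 := by
      intro i
      simpa using (Finset.sum_eq_zero_iff.mp hs) i (Finset.mem_univ i)
    refine ⟨phiE a b, ?_, ?_, ?_⟩
    · intro i; rw [phiE_inl, h0]; simp
    · intro j; rw [phiE_inr]; simp [transpGen, h0]
    · simp
  | succ m ih =>
    intro lam hanti hb hs
    obtain ⟨i, hi, hmax⟩ : ∃ i : Fin a, 1 ≤ lam i ∧ ∀ i', i < i' → lam i' = 0 := by
      have hne : (Finset.univ.filter fun i : Fin a => 1 ≤ lam i).Nonempty := by
        by_contra hcon
        rw [Finset.not_nonempty_iff_eq_empty, Finset.filter_eq_empty_iff] at hcon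
        have : ∑ i, lam i = 0 := Finset.sum_eq_zero fun i _ => by
          have := hcon (Finset.mem_univ i); omega
        omega
      refine ⟨Finset.max' _ hne, ?_, ?_⟩
      · have := Finset.max'_mem _ hne
        simpa using this
      · intro i' hi'
        by_contra hcon
        have : i' ≤ Finset.max' _ hne := Finset.le_max' _ _ (by simp; omega)
        exact absurd hi' (not_lt.mpr this)
    set lam' : Fin a → ℕ := Function.update lam i (lam i - 1) with hlam'
    have hl'i : lam' i = lam i - 1 := by simp [hlam']
    have hl'n : ∀ x, x ≠ i → lam' x = lam x := fun x hx => by simp [hlam', hx]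
    have hanti' : Antitone lam' := by
      intro x y hxy
      by_cases hx : x = i
      · by_cases hy : y = i
        · rw [hx, hy]
        · have : i < y := lt_of_le_of_ne (hx ▸ hxy) (Ne.symm hy)
          rw [hl'n y hy, hmax y this]; exact Nat.zero_le _
      · by_cases hy : y = i
        · subst hy
          rw [hl'i, hl'n x hx]
          have := hanti hxy; omega
        · rw [hl'n y hy, hl'n x hx]; exact hanti hxy
    have hb' : ∀ x, lam' x ≤ b := by
      intro x
      by_cases hx : x = i
      · subst hx; rw [hl'i]; have := hb x; omega
      · rw [hl'n x hx]; exact hb x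
    have hs' : ∑ x, lam' x = m := by
      have h1 := Finset.add_sum_erase Finset.univ lam (Finset.mem_univ i)
      have h2 := Finset.add_sum_erase Finset.univ lam' (Finset.mem_univ i)
      have h3 : ∑ x ∈ Finset.univ.erase i, lam' x = ∑ x ∈ Finset.univ.erase i, lam x :=
        Finset.sum_congr rfl fun x hx => hl'n x (Finset.ne_of_mem_erase hx)
      omega
    obtain ⟨psi, p1, p2, p3⟩ := ih lam' hanti' hb' hs'
    set j0 : Fin b := ⟨lam i - 1, by have := hb i; omega⟩ with hj0
    have t0 : transpGen lam b j0 = i + 1 := by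
      unfold transpGen
      have : (Finset.univ.filter fun x : Fin a => (j0 : ℕ) + 1 ≤ lam x) = Finset.Iic i := by
        ext x
        simp only [Finset.mem_filter, Finset.mem_univ, true_and, Finset.mem_Iic, hj0]
        constructor
        · intro h
          by_contra hcon
          have := hmax x (not_le.mp hcon)
          omega
        · intro h
          have := hanti h; omega
      rw [this, Fin.card_Iic]
    have t0' : transpGen lam' b j0 = i := by
      unfold transpGen
      have : (Finset.univ.filter fun x : Fin a => (j0 : ℕ) + 1 ≤ lam' x) = Finset.Iio i := by
        ext x
        simp only [Finset.mem_filter, Finset.mem_univ, true_and, Finset.mem_Iio, hj0]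
        constructor
        · intro h
          by_contra hcon
          rcases eq_or_lt_of_le (not_lt.mp hcon) with h2 | h2
          · subst h2; omega
          · rw [hl'n x (ne_of_gt h2), hmax x h2] at h
            omega
        · intro h
          rw [hl'n x (ne_of_lt h)]
          have := hanti h.le; omega
      rw [this, Fin.card_Iio]
    have t1 : ∀ j, j ≠ j0 → transpGen lam' b j = transpGen lam b j := by
      intro j hj
      unfold transpGen
      congr 1
      ext x
      simp only [Finset.mem_filter, Finset.mem_univ, true_and]
      by_cases hx : x = i
      · subst hx
        rw [hl'i]
        have : (j : ℕ) ≠ lam x - 1 := fun h => hj (Fin.ext h)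
        omega
      · rw [hl'n x hx]
    refine ⟨(Equiv.swap (Sum.inl i) (Sum.inr j0)).trans psi, ?_, ?_, ?_⟩
    · intro x
      by_cases hx : x = i
      · subst hx
        rw [Equiv.trans_apply, Equiv.swap_apply_left, p2, t0']
        simp only [hj0]; omega
      · rw [Equiv.trans_apply, Equiv.swap_apply_of_ne_of_ne (by simpa using hx) (by simp), p1,
          hl'n x hx]
    · intro j
      by_cases hj : j = j0
      · subst hj
        rw [Equiv.trans_apply, Equiv.swap_apply_right, p1, t0, hl'i]
        simp only [hj0]; omega
      · rw [Equiv.trans_apply, Equiv.swap_apply_of_ne_of_ne (by simp) (by simpa using hj), p2,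
          t1 j hj]
    · have : ((Equiv.swap (Sum.inl i) (Sum.inr j0)).trans psi).trans (phiE a b).symm =
          (psi.trans (phiE a b).symm) * (Equiv.swap (Sum.inl i) (Sum.inr j0)) := by
        ext x; rfl
      rw [this, Equiv.Perm.sign_mul, p3, Equiv.Perm.sign_swap (by simp), pow_succ]

theorem jacobi_block {B : Type*} [CommRing B] {m n : Type*} [Fintype m] [Fintype n]
    [DecidableEq m] [DecidableEq n] (H E : Matrix (m ⊕ n) (m ⊕ n) B) (h : H * E = 1) :
    H.det * E.toBlocks₂₂.det = H.toBlocks₁₁.det := by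
  have h1 : H * Matrix.fromBlocks 1 E.toBlocks₁₂ 0 E.toBlocks₂₂ =
      Matrix.fromBlocks H.toBlocks₁₁ 0 H.toBlocks₂₁ 1 := by
    have h' := h
    rw [← Matrix.fromBlocks_toBlocks H, ← Matrix.fromBlocks_toBlocks E,
      Matrix.fromBlocks_multiply, ← Matrix.fromBlocks_one, Matrix.fromBlocks_inj] at h'
    conv_lhs => rw [← Matrix.fromBlocks_toBlocks H]
    rw [Matrix.fromBlocks_multiply]
    obtain ⟨_, h2, _, h4⟩ := h'
    rw [h2, h4]
    simp
  have h2 := congrArg Matrix.det h1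
  rw [Matrix.det_mul, Matrix.det_fromBlocks_zero₂₁, Matrix.det_fromBlocks_zero₁₂] at h2
  simpa using h2

/-- sign `(-1)^z` for integers -/
def zsgn (B : Type*) [CommRing B] (z : ℤ) : B := (((-1 : ℤˣ) ^ z : ℤˣ) : ℤ)

theorem zsgn_add {B : Type*} [CommRing B] (x y : ℤ) : zsgn B (x + y) = zsgn B x * zsgn B y := by
  simp [zsgn, zpow_add]

theorem zsgn_nat {B : Type*} [CommRing B] (x : ℕ) : zsgn B x = (-1) ^ x := by
  simp [zsgn]

theorem jacobi_trudi {B : Type*} [CommRing B] (e h : ℤ → B) (a b : ℕ)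
    (e0 : e 0 = 1) (h0 : h 0 = 1) (en : ∀ t < 0, e t = 0) (hn : ∀ t < 0, h t = 0)
    (rel : ∀ r : ℕ, 1 ≤ r → r < a + b →
      ∑ p ∈ Finset.HasAntidiagonal.antidiagonal r, (-1) ^ p.2 * (e p.1 * h p.2) = 0)
    (lam : Fin a → ℕ) (hanti : Antitone lam) (hb : ∀ i, lam i ≤ b) :
    (Matrix.of fun i j : Fin b => e ((transpGen lam b i : ℤ) - i + j)).det =
      (Matrix.of fun i j : Fin a => h ((lam i : ℤ) - i + j)).det := by
  obtain ⟨psi, p1, p2, p3⟩ := exists_psi a b _ lam hanti hb rfl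
  let phi := phiE a b
  let U : Matrix (Fin (a+b)) (Fin (a+b)) B :=
    Matrix.of fun x y => zsgn B ((y : ℤ) - x) * h ((y : ℤ) - x)
  let V : Matrix (Fin (a+b)) (Fin (a+b)) B := Matrix.of fun x y => e ((y : ℤ) - x)
  have hUV : U * V = 1 := by
    ext x z
    rw [Matrix.mul_apply]
    simp only [U, V, Matrix.of_apply]
    rcases lt_trichotomy x z with hxz | hxz | hxz
    · rw [Matrix.one_apply_ne (ne_of_lt hxz)]
      have hlt : (x : ℕ) < z := hxz
      have hz := z.2
      rw [← rel ((z : ℕ) - x) (by omega) (by omega)]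
      symm
      have hsub : ∀ y : Fin (a+b), y ∉ Finset.Icc x z →
          zsgn B ((y : ℤ) - x) * h ((y : ℤ) - x) * e ((z : ℤ) - y) = 0 := by
        intro y hy
        rw [Finset.mem_Icc, not_and_or, not_le, not_le] at hy
        rcases hy with hy | hy
        · have : (y : ℕ) < x := hy
          rw [hn _ (by omega)]; simp
        · have : (z : ℕ) < y := hy
          rw [en _ (by omega)]; simp
      rw [← Finset.sum_subset (Finset.subset_univ (Finset.Icc x z)) (fun y _ hy => hsub y hy)]
      refine Finset.sum_bij' (fun p hp => (⟨x + p.2, by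
          rw [Finset.HasAntidiagonal.mem_antidiagonal] at hp; omega⟩ : Fin (a+b)))
        (fun y _ => ((z : ℕ) - y, (y : ℕ) - x)) ?_ ?_ ?_ ?_ ?_
      · intro p hp
        rw [Finset.HasAntidiagonal.mem_antidiagonal] at hp
        rw [Finset.mem_Icc, Fin.le_def, Fin.le_def]
        simp only; omega
      · intro y hy
        rw [Finset.mem_Icc, Fin.le_def, Fin.le_def] at hy
        rw [Finset.HasAntidiagonal.mem_antidiagonal]
        simp only; omega
      · intro p hp
        rw [Finset.HasAntidiagonal.mem_antidiagonal] at hp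
        ext <;> simp only <;> omega
      · intro y hy
        rw [Finset.mem_Icc, Fin.le_def, Fin.le_def] at hy
        ext; simp only; omega
      · intro p hp
        rw [Finset.HasAntidiagonal.mem_antidiagonal] at hp
        have q1 : (((x : ℕ) + p.2 : ℕ) : ℤ) - x = (p.2 : ℕ) := by push_cast; ring
        have q2 : (z : ℤ) - (((x : ℕ) + p.2 : ℕ) : ℤ) = (p.1 : ℕ) := by omega
        simp only [q1, q2, zsgn_nat]
        ring
    · subst hxz
      rw [Matrix.one_apply_eq, Finset.sum_eq_single x]
      · simp [h0, e0, zsgn]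
      · intro y _ hy
        rcases lt_or_gt_of_ne hy with hy | hy
        · have : (y : ℕ) < x := hy
          rw [hn _ (by omega)]; simp
        · have : (x : ℕ) < y := hy
          rw [en _ (by omega)]; simp
      · simp
    · rw [Matrix.one_apply_ne (ne_of_gt hxz)]
      apply Finset.sum_eq_zero
      intro y _
      have h1 : (z : ℕ) < x := hxz
      rcases Nat.lt_or_ge y x with hy | hy
      · rw [hn _ (by omega)]; simp
      · rw [en _ (by omega)]; simp
  have hUdet : U.det = 1 := by
    rw [Matrix.det_of_isUpperTriangular]
    · simp [U, h0, zsgn]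
    · intro x y hxy
      have : (y : ℕ) < x := hxy
      simp only [U, Matrix.of_apply]
      rw [hn _ (by omega)]; simp
  have hHE : U.submatrix phi psi * V.submatrix psi phi = 1 := by
    rw [Matrix.submatrix_mul_equiv, hUV, Matrix.submatrix_one_equiv]
  have key := jacobi_block _ _ hHE
  have hdet : (U.submatrix phi psi).det = (-1) ^ (∑ i, lam i) := by
    have : U.submatrix phi psi = (U.submatrix phi phi).submatrix id (psi.trans phi.symm) := by
      ext x y; simp
    rw [this, Matrix.det_permute', Matrix.det_submatrix_equiv_self, hUdet, p3]
    simp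
  have hE : (V.submatrix psi phi).toBlocks₂₂ =
      Matrix.of fun i j : Fin b => e ((transpGen lam b i : ℤ) - i + j) := by
    ext i j
    simp only [V, Matrix.toBlocks₂₂, Matrix.of_apply, Matrix.submatrix_apply, phi, phiE_inr, p2]
    congr 1; ring
  have hH : (U.submatrix phi psi).toBlocks₁₁ =
      (Matrix.of fun i j : Fin a => zsgn B ((lam j : ℤ) - j) *
        (Matrix.of (fun i j : Fin a => zsgn B i * (Matrix.of fun i j : Fin a =>
          h ((lam i : ℤ) - i + j)).transpose i j)) i j) := by
    ext i j
    simp only [U, Matrix.toBlocks₁₁, Matrix.of_apply, Matrix.submatrix_apply, phi, phiE_inl, p1,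
      Matrix.transpose_apply]
    rw [← mul_assoc, ← zsgn_add]
    congr 2 <;> ring
  rw [hdet, hE, hH, Matrix.det_mul_row, Matrix.det_mul_column, Matrix.det_transpose,
    ← mul_assoc, ← Finset.prod_mul_distrib] at key
  have hs : ∏ i : Fin a, zsgn B ((lam i : ℤ) - i) * zsgn B i = (-1) ^ (∑ i, lam i) := by
    rw [← Finset.prod_pow_eq_pow_sum]
    apply Finset.prod_congr rfl
    intro i _
    rw [← zsgn_add, sub_add_cancel, zsgn_nat]
  rw [hs] at key
  have hu : IsUnit ((-1 : B) ^ (∑ i, lam i)) := (isUnit_one.neg).pow _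
  exact hu.mul_left_cancel key

/-! transfer matrices -/

section Transfer

variable {R : Type*} [CommRing R] {β : Type*} [Fintype β] [DecidableEq β]

theorem path_sum (m : ℕ) (M : Fin m → Matrix β β R) (F : β → R) (a : β) :
    ∑ b, (List.ofFn M).prod a b * F b =
      ∑ c : Fin m → β, (∏ i, M i ((Fin.cons a c : Fin (m+1) → β) i.castSucc) (c i)) *
        F ((Fin.cons a c : Fin (m+1) → β) (Fin.last m)) := by
  induction m generalizing a with
  | zero =>
    simp [Matrix.one_apply]
  | succ m ih =>
    rw [List.ofFn_succ, List.prod_cons]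
    simp only [Matrix.mul_apply, Finset.sum_mul]
    rw [Finset.sum_comm]
    rw [← (Fin.consEquiv (fun _ : Fin (m+1) => β)).sum_comp, Fintype.sum_prod_type]
    apply Finset.sum_congr rfl
    intro c0 _
    have h := ih (fun i => M i.succ) c0
    simp only [mul_assoc]
    rw [← Finset.mul_sum, h, Finset.mul_sum]
    apply Finset.sum_congr rfl
    intro c _
    have hce : (Fin.consEquiv fun _ : Fin (m+1) => β) (c0, c) = Fin.cons c0 c := rfl
    simp only [hce]
    rw [Fin.prod_univ_succ]
    simp only [Fin.castSucc_zero, Fin.cons_zero, Fin.cons_succ, ← Fin.succ_castSucc,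
      ← Fin.succ_last]
    ring

theorem trace_sum (m : ℕ) (M : Fin (m+1) → Matrix β β R) :
    (List.ofFn M).prod.trace = ∑ c : Fin (m+1) → β, ∏ i, M i (c (i - 1)) (c i) := by
  unfold Matrix.trace
  simp only [Matrix.diag_apply]
  have h1 : ∀ a, (List.ofFn M).prod a a =
      ∑ b, (List.ofFn M).prod a b * (if b = a then 1 else 0) := by
    intro a; simp
  rw [Finset.sum_congr rfl (fun a _ => (h1 a).trans (path_sum _ M _ a)), Finset.sum_comm]
  apply Finset.sum_congr rfl
  intro c _
  rw [Finset.sum_eq_single (c (Fin.last m))]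
  · rw [← Fin.succ_last, Fin.cons_succ, if_pos rfl, mul_one]
    apply Finset.prod_congr rfl
    intro i _
    congr 1
    refine Fin.cases ?_ (fun j => ?_) i
    · simp only [Fin.castSucc_zero, Fin.cons_zero]
      congr 1
      rw [zero_sub, eq_neg_iff_add_eq_zero, Fin.last_add_one]
    · rw [← Fin.succ_castSucc, Fin.cons_succ]
      congr 1
      rw [← Fin.coeSucc_eq_succ, add_sub_cancel_right]
  · intro b _ hb
    rw [← Fin.succ_last, Fin.cons_succ, if_neg (Ne.symm hb), mul_zero]
  · simp

theorem list_intertwine (m : ℕ) (M M' : Fin m → Matrix β β R) (S : Matrix β β R)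
    (h : ∀ i, S * M i = M' i * S) :
    S * (List.ofFn M).prod = (List.ofFn M').prod * S := by
  induction m with
  | zero => simp
  | succ m ih =>
    rw [List.ofFn_succ, List.ofFn_succ, List.prod_cons, List.prod_cons, ← mul_assoc, h, mul_assoc,
      ih _ _ (fun i => h i.succ), mul_assoc]

theorem trace_intertwine (m : ℕ) (M M' : Fin m → Matrix β β R) (S Q : Matrix β β R) (d : R)
    (h : ∀ i, S * M i = M' i * S) (h1 : Q * S = d • 1) (h2 : S * Q = d • 1) :
    d * (List.ofFn M).prod.trace = d * (List.ofFn M').prod.trace := by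
  have k := list_intertwine m M M' S h
  calc d * (List.ofFn M).prod.trace = (Q * S * (List.ofFn M).prod).trace := by
        rw [h1]; simp
    _ = (Q * ((List.ofFn M').prod * S)).trace := by rw [mul_assoc, k]
    _ = ((List.ofFn M').prod * (S * Q)).trace := by
        rw [Matrix.trace_mul_comm, mul_assoc]
    _ = _ := by rw [h2]; simp

theorem cyc_sum_intertwine (N : ℕ) [NeZero N] (M M' : ZMod N → Matrix β β R) (S Q : Matrix β β R)
    (d : R) (h : ∀ i, S * M i = M' i * S) (h1 : Q * S = d • 1) (h2 : S * Q = d • 1) :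
    d * ∑ c : ZMod N → β, ∏ x, M x (c (x - 1)) (c x) =
      d * ∑ c : ZMod N → β, ∏ x, M' x (c (x - 1)) (c x) := by
  obtain ⟨m, rfl⟩ : ∃ m, N = m + 1 := ⟨N - 1, by have := NeZero.ne N; omega⟩
  have h3 := trace_intertwine (m + 1) M M' S Q d h h1 h2
  rw [trace_sum m M, trace_sum m M'] at h3
  exact h3

end Transfer

section YB

variable {R : Type*} [CommRing R]

/-- two-row vertex matrix -/
def MM (s t : R) (a b : Bool) : Matrix (Bool × Bool) (Bool × Bool) R :=
  Matrix.of fun i o => ∑ k : Bool, vw a k i.1 o.1 s * vw k b i.2 o.2 t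

def SS (s t : R) : Matrix (Bool × Bool) (Bool × Bool) R :=
  Matrix.of fun i o => match i, o with
    | (false, false), (false, false) => s
    | (true, true), (true, true) => t
    | (false, true), (false, true) => t
    | (false, true), (true, false) => s - t
    | (true, false), (true, false) => s
    | _, _ => 0

def QQ (s t : R) : Matrix (Bool × Bool) (Bool × Bool) R :=
  Matrix.of fun i o => match i, o with
    | (false, false), (false, false) => t
    | (true, true), (true, true) => s
    | (false, true), (false, true) => s
    | (false, true), (true, false) => t - s
    | (true, false), (true, false) => t
    | _, _ => 0

theorem SS_QQ (s t : R) : SS s t * QQ s t = (s * t) • 1 := by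
  ext ⟨i1, i2⟩ ⟨o1, o2⟩
  cases i1 <;> cases i2 <;> cases o1 <;> cases o2 <;>
    simp [Matrix.mul_apply, Fintype.sum_prod_type, SS, QQ, Matrix.one_apply] <;> ring

theorem QQ_SS (s t : R) : QQ s t * SS s t = (s * t) • 1 := by
  ext ⟨i1, i2⟩ ⟨o1, o2⟩
  cases i1 <;> cases i2 <;> cases o1 <;> cases o2 <;>
    simp [Matrix.mul_apply, Fintype.sum_prod_type, SS, QQ, Matrix.one_apply] <;> ring

theorem vw_tab (z : R) (a b ci co : Bool) : vw a b ci co z =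
    match ci, co, a, b with
    | false, false, false, false => 1
    | false, false, true, true => 1
    | false, true, false, true => z
    | true, false, true, false => 1
    | true, true, true, true => z
    | _, _, _, _ => 0 := by
  cases a <;> cases b <;> cases ci <;> cases co <;> simp [vw]

set_option maxHeartbeats 4000000 in
theorem SS_MM (s t z : R) (a b : Bool) :
    SS s t * MM (s * z) (t * z) a b = MM (t * z) (s * z) a b * SS s t := by
  ext ⟨i1, i2⟩ ⟨o1, o2⟩
  simp only [Matrix.mul_apply, Fintype.sum_prod_type, SS, MM, vw_tab, Matrix.of_apply,
    Fintype.sum_bool]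
  cases a <;> cases b <;> cases i1 <;> cases i2 <;> cases o1 <;> cases o2 <;>
    ring

end YB

/-! commutativity -/

section Comm

variable (R : Type*) [CommRing R] (N : ℕ) [NeZero N] (q : R)

def TT (s : R) : Matrix (ZMod N → Bool) (ZMod N → Bool) R :=
  ∑ I : Finset (ZMod N), s ^ I.card • ampS R N q I

def boolE : Finset (ZMod N) ≃ (ZMod N → Bool) where
  toFun I := fun x => decide (x ∈ I)
  invFun c := Finset.univ.filter fun x => c x = true
  left_inv I := by ext x; simp
  right_inv c := by funext x; simp

theorem TT_apply (s : R) (v w : ZMod N → Bool) :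
    TT R N q s v w = ∑ c : ZMod N → Bool, ∏ x, vw (v x) (w x) (c (x-1)) (c x) (s * qw N q x) := by
  unfold TT
  rw [← (boolE N).sum_comp, Matrix.sum_apply]
  apply Finset.sum_congr rfl
  intro I _
  rw [Matrix.smul_apply, smul_eq_mul, amp_prod]
  rfl

theorem TT_mul (s t : R) (v w : ZMod N → Bool) :
    (TT R N q s * TT R N q t) v w = ∑ c : ZMod N → Bool × Bool,
      ∏ x, MM (s * qw N q x) (t * qw N q x) (v x) (w x) (c (x-1)) (c x) := by
  rw [Matrix.mul_apply]
  simp only [TT_apply, MM, Matrix.of_apply]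
  simp only [Finset.prod_univ_sum, Fintype.piFinset_univ, Finset.prod_mul_distrib]
  rw [Finset.sum_comm]
  apply Finset.sum_congr rfl
  intro k _
  rw [Finset.sum_mul_sum, ← (Equiv.arrowProdEquivProdArrow _ _ _).symm.sum_comp,
    Fintype.sum_prod_type]
  rfl

theorem TT_comm (s t : R) (v w : ZMod N → Bool) :
    s * t * (TT R N q s * TT R N q t) v w = s * t * (TT R N q t * TT R N q s) v w := by
  rw [TT_mul, TT_mul]
  exact cyc_sum_intertwine N (fun x => MM (s * qw N q x) (t * qw N q x) (v x) (w x))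
    (fun x => MM (t * qw N q x) (s * qw N q x) (v x) (w x)) (SS s t) (QQ s t) (s * t)
    (fun x => SS_MM _ _ _ _ _) (QQ_SS s t) (SS_QQ s t)

variable {R} in
theorem coeff_extract [IsDomain R] [Infinite R] (M : ℕ) (f g : ℕ → R)
    (h : ∀ s, s * ∑ r ∈ Finset.range M, s ^ r * f r = s * ∑ r ∈ Finset.range M, s ^ r * g r) :
    ∀ r < M, f r = g r := by
  intro r hr
  have key : (Polynomial.X * ∑ r ∈ Finset.range M, Polynomial.X ^ r * Polynomial.C (f r)) =
      (Polynomial.X * ∑ r ∈ Finset.range M, Polynomial.X ^ r * Polynomial.C (g r)) := by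
    apply Polynomial.funext
    intro s
    simpa only [Polynomial.eval_mul, Polynomial.eval_X, Polynomial.eval_finset_sum,
      Polynomial.eval_pow, Polynomial.eval_C] using h s
  have := congrArg (fun p => Polynomial.coeff p (r+1)) key
  simpa [Polynomial.coeff_X_mul, Polynomial.finset_sum_coeff, Polynomial.coeff_X_pow_mul',
    Polynomial.coeff_X_pow, hr] using this

def EM (r : ℕ) : Matrix (ZMod N → Bool) (ZMod N → Bool) R :=
  ∑ I ∈ Finset.powersetCard r (Finset.univ : Finset (ZMod N)), ampS R N q I

theorem TT_eq (s : R) : TT R N q s = ∑ r ∈ Finset.range (N+1), s ^ r • EM R N q r := by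
  unfold TT EM
  have : (Finset.univ : Finset (Finset (ZMod N))) = (Finset.univ : Finset (ZMod N)).powerset := by
    ext; simp
  rw [this, Finset.sum_powerset, Finset.card_univ, ZMod.card]
  apply Finset.sum_congr rfl
  intro r _
  rw [Finset.smul_sum]
  apply Finset.sum_congr rfl
  intro I hI
  rw [(Finset.mem_powersetCard.mp hI).2]

theorem TT_mul_eq (s t : R) (v w : ZMod N → Bool) : (TT R N q s * TT R N q t) v w =
    ∑ r ∈ Finset.range (N+1), s ^ r *
      ∑ p ∈ Finset.range (N+1), t ^ p * (EM R N q r * EM R N q p) v w := by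
  rw [TT_eq, TT_eq, Finset.sum_mul_sum, Matrix.sum_apply]
  apply Finset.sum_congr rfl
  intro r _
  rw [Matrix.sum_apply, Finset.mul_sum]
  apply Finset.sum_congr rfl
  intro p _
  simp only [Matrix.smul_mul, Matrix.mul_smul, Matrix.smul_apply, smul_eq_mul]
  ring

theorem EM_comm [IsDomain R] [Infinite R] (r p : ℕ) (hr : r < N + 1) (hp : p < N + 1) :
    EM R N q r * EM R N q p = EM R N q p * EM R N q r := by
  ext v w
  have h1 : ∀ t, t * ∑ p ∈ Finset.range (N+1), t ^ p * (EM R N q r * EM R N q p) v w =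
      t * ∑ p ∈ Finset.range (N+1), t ^ p * (EM R N q p * EM R N q r) v w := by
    intro t
    have h2 := coeff_extract (N+1)
      (fun r => t * ∑ p ∈ Finset.range (N+1), t ^ p * (EM R N q r * EM R N q p) v w)
      (fun r => t * ∑ p ∈ Finset.range (N+1), t ^ p * (EM R N q p * EM R N q r) v w) ?_ r hr
    · exact h2
    · intro s
      have h3 := TT_comm R N q s t v w
      rw [TT_mul_eq, TT_mul_eq] at h3
      calc _ = _ := ?_
        _ = _ := h3
        _ = _ := ?_
      · simp only [Finset.mul_sum]
        apply Finset.sum_congr rfl; intro r _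
        apply Finset.sum_congr rfl; intro p _
        ring
      · simp only [Finset.mul_sum]
        rw [Finset.sum_comm]
        apply Finset.sum_congr rfl; intro r _
        apply Finset.sum_congr rfl; intro p _
        ring
  exact coeff_extract (N+1) _ _ h1 p hp

theorem toMat_eSum (hN : 2 ≤ N) (r : ℕ) (hr : r < N) :
    LinearMap.toMatrixAlgEquiv (Finsupp.basisSingleOne (R := R) (ι := ZMod N → Bool))
      (eSum (uOp R N q) r) = EM R N q r := by
  unfold eSum EM
  rw [map_sum]
  apply Finset.sum_congr rfl
  intro I hI
  have hI' : I ≠ Finset.univ := by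
    rintro rfl
    have := (Finset.mem_powersetCard.mp hI).2
    rw [Finset.card_univ, ZMod.card] at this
    omega
  ext v w
  rw [LinearMap.toMatrixAlgEquiv_apply]
  simp only [Finsupp.coe_basisSingleOne, Finsupp.basisSingleOne_repr, LinearEquiv.refl_apply]
  rw [cyc_apply R N q hN w I hI']
  simp only [ampS, Matrix.of_apply]
  by_cases h : okS N I w
  · by_cases h2 : resS N I w = v
    · simp [h, h2]
    · simp [h, h2, Finsupp.single_apply]
  · simp [h]

theorem eSum_comm [IsDomain R] [Infinite R] (hN : 2 ≤ N) (r p : ℕ) (hr : r < N) (hp : p < N) :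
    Commute (eSum (uOp R N q) r) (eSum (uOp R N q) p) := by
  apply (LinearMap.toMatrixAlgEquiv
    (Finsupp.basisSingleOne (R := R) (ι := ZMod N → Bool))).injective
  rw [map_mul, map_mul, toMat_eSum R N q hN r hr, toMat_eSum R N q hN p hp]
  exact EM_comm R N q r p (by omega) (by omega)

end Comm

/-! the algebraic identity and the particle-hole involution -/

section Alg

theorem exists_comm_model.{v} {A : Type v} [Ring A] (s : Set A)
    (hs : ∀ x ∈ s, ∀ y ∈ s, x * y = y * x) :
    ∃ (B : Type v) (_ : CommRing B) (f : B →+* A), Function.Injective f ∧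
      ∀ x, x ∈ Subring.closure s → ∃ b, f b = x := by
  letI : CommRing (Subring.closure s) :=
    { (inferInstance : Ring (Subring.closure s)) with
      mul_comm := by
        have := Subring.isMulCommutative_closure hs
        exact fun a b => mul_comm' a b }
  exact ⟨Subring.closure s, inferInstance, (Subring.closure s).subtype,
    Subtype.val_injective, fun x hx => ⟨⟨x, hx⟩, rfl⟩⟩

theorem ncDet_map {A C : Type*} [Ring A] [Ring C] (f : A →+* C) {r : ℕ} (M : Fin r → Fin r → A) :
    f (ncDet M) = ncDet fun i j => f (M i j) := by
  unfold ncDet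
  rw [map_sum]
  apply Finset.sum_congr rfl
  intro σ _
  rw [map_mul, map_intCast, map_list_prod, List.map_map]
  rfl

theorem ncDet_comm {B : Type*} [CommRing B] {r : ℕ} (M : Fin r → Fin r → B) :
    ncDet M = (Matrix.of M).det := by
  unfold ncDet
  rw [Matrix.det_apply']
  apply Finset.sum_congr rfl
  intro σ _
  rw [Fin.prod_univ_def]
  rfl

theorem nc_jacobi_trudi {A : Type*} [Ring A] (e h : ℤ → A) (N a b : ℕ) (hab : a + b ≤ N)
    (e0 : e 0 = 1) (h0 : h 0 = 1) (en : ∀ t < 0, e t = 0) (hn : ∀ t < 0, h t = 0)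
    (eN : ∀ t, (N : ℤ) ≤ t → e t = 0) (hN : ∀ t, (N : ℤ) ≤ t → h t = 0)
    (hc : ∀ s t, e s * e t = e t * e s)
    (rel : ∀ r : ℕ, 1 ≤ r → r < N →
      ∑ p ∈ Finset.HasAntidiagonal.antidiagonal r, (-1) ^ p.2 * (e p.1 * h p.2) = 0)
    (lam : Fin a → ℕ) (hanti : Antitone lam) (hb : ∀ i, lam i ≤ b) :
    ncDet (fun i j : Fin b => e ((transpGen lam b i : ℤ) - i + j)) =
      ncDet (fun i j : Fin a => h ((lam i : ℤ) - i + j)) := by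
  obtain ⟨B, _, f, finj, hf⟩ := exists_comm_model (Set.range e) (by
    rintro _ ⟨s, rfl⟩ _ ⟨t, rfl⟩; exact hc s t)
  have he : ∀ t, e t ∈ Subring.closure (Set.range e) := fun t =>
    Subring.subset_closure ⟨t, rfl⟩
  have hh : ∀ r : ℕ, r < N → h r ∈ Subring.closure (Set.range e) := by
    intro r
    induction r using Nat.strong_induction_on with
    | _ r ih =>
      intro hr
      rcases Nat.eq_zero_or_pos r with rfl | hpos
      · simp only [Nat.cast_zero, h0]; exact Subring.one_mem _
      · have h1 := rel r hpos hr
        have hm : (0, r) ∈ Finset.HasAntidiagonal.antidiagonal r := by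
          simp [Finset.HasAntidiagonal.mem_antidiagonal]
        rw [← Finset.add_sum_erase _ _ hm] at h1
        simp only [Nat.cast_zero, e0, one_mul] at h1
        have h2 : ∑ p ∈ (Finset.HasAntidiagonal.antidiagonal r).erase (0, r),
            (-1) ^ p.2 * (e p.1 * h p.2) ∈ Subring.closure (Set.range e) := by
          apply Subring.sum_mem
          rintro ⟨i, j⟩ hp
          rw [Finset.mem_erase, Finset.HasAntidiagonal.mem_antidiagonal] at hp
          obtain ⟨hp1, hp2⟩ := hp
          simp only at hp2
          have hi : i ≠ 0 := by
            rintro rfl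
            apply hp1
            simp only [zero_add] at hp2
            rw [hp2]
          refine Subring.mul_mem _ (Subring.pow_mem _ (Subring.neg_mem _ (Subring.one_mem _)) _)
            (Subring.mul_mem _ (he _) (ih j (by omega) (by omega)))
        have h3 : h r = -((-1) ^ r * ∑ p ∈ (Finset.HasAntidiagonal.antidiagonal r).erase (0, r),
            (-1) ^ p.2 * (e p.1 * h p.2)) := by
          have h4 := eq_neg_of_add_eq_zero_right h1
          rw [h4, mul_neg, neg_neg, ← mul_assoc, ← pow_add, ← two_mul, pow_mul]
          simp
        rw [h3]
        exact Subring.neg_mem _ (Subring.mul_mem _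
          (Subring.pow_mem _ (Subring.neg_mem _ (Subring.one_mem _)) _) h2)
  have hh' : ∀ t : ℤ, h t ∈ Subring.closure (Set.range e) := by
    intro t
    by_cases t1 : t < 0
    · rw [hn t t1]; exact Subring.zero_mem _
    · by_cases t2 : (N : ℤ) ≤ t
      · rw [hN t t2]; exact Subring.zero_mem _
      · obtain ⟨r, rfl⟩ := Int.eq_ofNat_of_zero_le (not_lt.mp t1)
        exact hh r (by omega)
  choose e' he' using fun t => hf _ (he t)
  choose h' hh'' using fun t => hf _ (hh' t)
  have jt := jacobi_trudi e' h' a b (finj (by rw [he', e0, map_one]))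
    (finj (by rw [hh'', h0, map_one])) (fun t ht => finj (by rw [he', en t ht, map_zero]))
    (fun t ht => finj (by rw [hh'', hn t ht, map_zero])) (by
      intro r hr hrN
      apply finj
      rw [map_sum, map_zero, ← rel r hr (by omega)]
      apply Finset.sum_congr rfl
      intro p _
      rw [map_mul, map_mul, he', hh'', map_pow, map_neg, map_one]) lam hanti hb
  have := congrArg f jt
  rw [← ncDet_comm, ← ncDet_comm, ncDet_map, ncDet_map] at this
  simpa only [he', hh''] using this

end Alg

section Theta

theorem cyc_map {N : ℕ} [NeZero N] {A C : Type*} [Ring A] [Ring C] (f : A →+* C)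
    (u : ZMod N → A) (I : Finset (ZMod N)) :
    f (cycProdAsc u I) = cycProdAsc (fun x => f (u x)) I := by
  rw [cycProdAsc_eq, cycProdAsc_eq]
  unfold ascG
  rw [map_list_prod, List.map_map]
  congr 1
  apply List.map_congr_left
  intro t _
  simp only [Function.comp]
  split_ifs <;> simp

theorem eSum_map {N : ℕ} [NeZero N] {A C : Type*} [Ring A] [Ring C] (f : A →+* C)
    (u : ZMod N → A) (r : ℕ) :
    f (eSum u r) = eSum (fun x => f (u x)) r := by
  unfold eSum
  rw [map_sum]
  exact Finset.sum_congr rfl fun I _ => cyc_map f u I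

theorem eSum_zero {N : ℕ} [NeZero N] {A : Type*} [Ring A] (u : ZMod N → A) :
    eSum u 0 = 1 := by
  unfold eSum
  rw [Finset.powersetCard_zero, Finset.sum_singleton, cycProdAsc_eq]
  simp [ascG]

def thE (N : ℕ) : (ZMod N → Bool) ≃ (ZMod N → Bool) where
  toFun w := fun p => !w (1 - p)
  invFun w := fun p => !w (1 - p)
  left_inv w := by funext p; simp
  right_inv w := by funext p; simp

variable (R : Type*) [CommRing R] (N : ℕ) [NeZero N] (q : R)

def ThL : WSp R N ≃ₗ[R] WSp R N := Finsupp.domLCongr (thE N)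

def Phi : Module.End R (WSp R N) →+* Module.End R (WSp R N) :=
  ((ThL R N).conjAlgEquiv R : Module.End R (WSp R N) →+* Module.End R (WSp R N))

theorem Phi_apply (f : Module.End R (WSp R N)) (w : ZMod N → Bool) (a : R) :
    Phi R N f (Finsupp.single w a) = ThL R N (f (Finsupp.single (thE N w) a)) := by
  have : (ThL R N).symm (Finsupp.single w a) = Finsupp.single (thE N w) a := by
    rw [LinearEquiv.symm_apply_eq]
    unfold ThL
    rw [Finsupp.domLCongr_single]
    congr 1
    exact ((thE N).right_inv w).symm
  rw [← this]
  rfl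

theorem Phi_uOp (hN : 2 ≤ N) (c : ZMod N) : Phi R N (uOp R N q c) = uOp R N q (-c) := by
  apply end_ext
  intro w
  rw [Phi_apply, uOp_single R N q hN, uOp_single R N q hN]
  have e1 : (thE N w c = true ∧ thE N w (c+1) = false) ↔ (w (-c) = true ∧ w (-c+1) = false) := by
    have a1 : (1 : ZMod N) - (c + 1) = -c := by ring
    have a2 : (1 : ZMod N) - c = -c + 1 := by ring
    simp only [thE, Equiv.coe_fn_mk, a1, a2]
    cases w (-c) <;> cases w (-c+1) <;> simp
  by_cases h : w (-c) = true ∧ w (-c+1) = false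
  · rw [if_pos h, if_pos (e1.mpr h)]
    unfold ThL
    rw [Finsupp.domLCongr_single]
    have : thE N (mvW N (thE N w) c) = mvW N w (-c) := by
      funext p
      simp only [thE, Equiv.coe_fn_mk, mvW]
      have hne := add_one_ne hN (-c)
      by_cases p1 : p = -c
      · subst p1
        simp [hne.symm, add_comm]
      · have : 1 - p ≠ c + 1 := fun hh => p1 (by linear_combination -hh)
        by_cases p2 : p = -c + 1
        · subst p2; simp
          exact fun hh => absurd (by rw [hh, add_zero]) (add_one_ne hN c)
        · have h3 : 1 - p ≠ c := fun hh => p2 (by linear_combination -hh)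
          simp [p1, p2, this, h3]
    rw [this]
    simp
  · rw [if_neg h, if_neg (fun hh => h (e1.mp hh)), map_zero]

def eF (t : ℤ) : Module.End R (WSp R N) :=
  if 0 ≤ t ∧ t < N then eSum (uOp R N q) t.toNat else 0

theorem eUInt_eq (t : ℤ) : eUInt R N q t = eF R N q t := by
  unfold eUInt eF
  by_cases h : t = 0
  · subst h
    have := NeZero.pos N
    rw [if_pos rfl, if_pos (by constructor <;> simp [this]), Int.toNat_zero, eSum_zero]
  · rw [if_neg h]
    by_cases h2 : 0 ≤ t ∧ t < N
    · rw [if_pos h2, if_pos (by omega)]; rfl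
    · rw [if_neg h2, if_neg (by omega)]

theorem op_jt [IsDomain R] [Infinite R] (hN : 3 ≤ N) (a b : ℕ) (hab : a + b ≤ N)
    (lam : Fin a → ℕ) (hanti : Antitone lam) (hb : ∀ i, lam i ≤ b) :
    ncDet (fun i j : Fin b => eUInt R N q ((transpGen lam b i : ℤ) - i + j)) =
      Phi R N (ncDet (fun i j : Fin a => eUInt R N q ((lam i : ℤ) - i + j))) := by
  have hN2 : 2 ≤ N := by omega
  rw [ncDet_map (A := Module.End R (WSp R N)) (C := Module.End R (WSp R N)) (Phi R N)]
  simp only [eUInt_eq]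
  have z0 : eF R N q 0 = 1 := by
    unfold eF
    rw [if_pos (by omega), Int.toNat_zero, eSum_zero]
  have zn : ∀ t < 0, eF R N q t = 0 := fun t ht => by
    unfold eF; rw [if_neg (by omega)]
  have zN : ∀ t, (N : ℤ) ≤ t → eF R N q t = 0 := fun t ht => by
    unfold eF; rw [if_neg (by omega)]
  refine nc_jacobi_trudi (eF R N q) (fun t => Phi R N (eF R N q t)) N a b hab z0
    (by simp only [z0, map_one]) zn (fun t ht => by simp only [zn t ht, map_zero]) zN
    (fun t ht => by simp only [zN t ht, map_zero]) ?_ ?_ lam hanti hb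
  · intro s t
    unfold eF
    split_ifs with h1 h2 h2
    · exact eSum_comm R N q hN2 _ _ (by omega) (by omega)
    all_goals simp
  · intro r hr hrN
    rw [← eh_rel (uOp R N q) (uOp_comm R N q hN) (uOp_sq R N q hN2) r hr hrN]
    apply Finset.sum_congr rfl
    intro p hp
    rw [Finset.HasAntidiagonal.mem_antidiagonal] at hp
    have e1 : eF R N q (p.1 : ℤ) = eSum (uOp R N q) p.1 := by
      unfold eF; rw [if_pos (by omega), Int.toNat_natCast]
    have e2 : eF R N q (p.2 : ℤ) = eSum (uOp R N q) p.2 := by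
      unfold eF; rw [if_pos (by omega), Int.toNat_natCast]
    rw [e1, e2, eSum_map (A := Module.End R (WSp R N)) (C := Module.End R (WSp R N)) (Phi R N)]
    simp only [Phi_uOp R N q hN2]

end Theta

/-! partitions and words -/

section Words

theorem lt_card_iff {k : ℕ} (lam : Fin k → ℕ) (ha : Antitone lam) (m : ℕ) (i : Fin k) :
    (i : ℕ) < (Finset.univ.filter fun i' : Fin k => m ≤ lam i').card ↔ m ≤ lam i := by
  constructor
  · intro h
    by_contra hc
    have hsub : (Finset.univ.filter fun i' : Fin k => m ≤ lam i') ⊆ Finset.Iio i := by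
      intro x hx
      simp only [Finset.mem_filter, Finset.mem_univ, true_and] at hx
      rw [Finset.mem_Iio]
      by_contra hx2
      exact hc (hx.trans (ha (not_lt.mp hx2)))
    have := Finset.card_le_card hsub
    rw [Fin.card_Iio] at this
    omega
  · intro h
    have hsub : Finset.Iic i ⊆ (Finset.univ.filter fun i' : Fin k => m ≤ lam i') := by
      intro x hx
      rw [Finset.mem_Iic] at hx
      simp only [Finset.mem_filter, Finset.mem_univ, true_and]
      exact h.trans (ha hx)
    have := Finset.card_le_card hsub
    rw [Fin.card_Iic] at this
    omega

theorem card_fin_lt (n m : ℕ) (h : m ≤ n) :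
    (Finset.univ.filter fun j : Fin n => (j : ℕ) + 1 ≤ m).card = m := by
  have := Fin.card_filter_val_lt (n := n) (m := m)
  rw [Nat.min_eq_right h] at this
  simpa only [Nat.succ_le_iff] using this

theorem transp_transp {k : ℕ} (n a : ℕ) (lam : Fin k → ℕ) (ha : Antitone lam)
    (hb : ∀ i, lam i ≤ n) (hak : a ≤ k) (i : Fin a) :
    transpGen (transpGen lam n) a i = lam (Fin.castLE hak i) := by
  unfold transpGen
  rw [← card_fin_lt n (lam (Fin.castLE hak i)) (hb _)]
  congr 1
  ext j
  simp only [Finset.mem_filter, Finset.mem_univ, true_and]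
  rw [← lt_card_iff lam ha]
  rfl

theorem transp_restrict {k : ℕ} (a b : ℕ) (lam : Fin k → ℕ) (hak : a ≤ k)
    (h : ∀ i : Fin k, 1 ≤ lam i → (i : ℕ) < a) (j : Fin b) :
    transpGen (fun i : Fin a => lam (Fin.castLE hak i)) b j = transpGen lam b j := by
  unfold transpGen
  rw [← Finset.card_map (Fin.castLEEmb hak)]
  congr 1
  ext x
  simp only [Finset.mem_map, Finset.mem_filter, Finset.mem_univ, true_and]
  constructor
  · rintro ⟨y, hy, rfl⟩; exact hy
  · intro hx
    exact ⟨⟨x, h x (by omega)⟩, hx, rfl⟩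

theorem partVal_anti {r c : ℕ} (σ : PartBox r c) : Antitone (partVal σ) := fun i j h => σ.2 i j h

theorem partVal_le {r c : ℕ} (σ : PartBox r c) (i : Fin r) : partVal σ i ≤ c := by
  have := (σ.1 i).2
  unfold partVal; omega

theorem theta_word (n k : ℕ) [NeZero (n + k)] (mu : Fin k → ℕ) (ha : Antitone mu)
    (hb : ∀ i, mu i ≤ n) :
    thE (n + k) (wordOf (n + k) k mu) = wordOf (n + k) n (transpGen mu n) := by
  obtain ⟨psi, p1, p2, -⟩ := exists_psi k n _ mu ha hb rfl
  have hz : ((n : ZMod (n+k)) + (k : ZMod (n+k))) = 0 := by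
    exact_mod_cast ZMod.natCast_self (n + k)
  have inj : ∀ x y : Fin (k + n), ((x : ℕ) : ZMod (n + k)) = ((y : ℕ) : ZMod (n+k)) → x = y := by
    intro x y h
    rw [ZMod.natCast_eq_natCast_iff'] at h
    rw [Nat.mod_eq_of_lt (by omega), Nat.mod_eq_of_lt (by omega)] at h
    exact Fin.ext h
  have w1 : ∀ p : ZMod (n + k), wordOf (n + k) k mu p = true ↔
      ∃ i : Fin k, p = ((psi (Sum.inl i) : ℕ) : ZMod (n+k)) + 1 := by
    intro p
    unfold wordOf
    rw [decide_eq_true_iff]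
    have key : ∀ i : Fin k, ((psi (Sum.inl i.rev) : ℕ)) = mu i.rev + i := by
      intro i
      have := p1 i.rev
      have h2 := Fin.val_rev i
      have := i.2
      omega
    constructor
    · rintro ⟨i, rfl⟩
      exact ⟨i.rev, by rw [key]; push_cast; ring⟩
    · rintro ⟨i, rfl⟩
      refine ⟨i.rev, ?_⟩
      have := key i.rev
      rw [Fin.rev_rev] at this ⊢
      rw [this]; push_cast; ring
  have w2 : ∀ p : ZMod (n + k), wordOf (n + k) n (transpGen mu n) p = true ↔
      ∃ j : Fin n, p = - ((psi (Sum.inr j) : ℕ) : ZMod (n+k)) := by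
    intro p
    unfold wordOf
    rw [decide_eq_true_iff]
    have key : ∀ j : Fin n, ((transpGen mu n j + (j.rev : ℕ) + 1 : ℕ) : ZMod (n + k)) =
        - ((psi (Sum.inr j) : ℕ) : ZMod (n+k)) := by
      intro j
      have h1 := p2 j
      have h2 := Fin.val_rev j
      have h3 := j.2
      have h4 : transpGen mu n j + (j.rev : ℕ) + 1 + (psi (Sum.inr j) : ℕ) = n + k := by omega
      have h5 := congrArg (fun x : ℕ => (x : ZMod (n + k))) h4
      simp only [Nat.cast_add] at h5
      rw [hz] at h5
      push_cast
      linear_combination h5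
    constructor
    · rintro ⟨i, rfl⟩
      exact ⟨i.rev, by rw [← key, Fin.rev_rev]⟩
    · rintro ⟨i, rfl⟩
      exact ⟨i.rev, by rw [← key, Fin.rev_rev]⟩
  funext p
  rw [Bool.eq_iff_iff, w2]
  simp only [thE, Equiv.coe_fn_mk, Bool.not_eq_true']
  rw [← Bool.not_eq_true, w1]
  have hlt : (-p).val < k + n := by have := ZMod.val_lt (-p); omega
  have hx : (((⟨(-p).val, hlt⟩ : Fin (k+n)) : ℕ) : ZMod (n+k)) = -p := by
    simp
  obtain ⟨y, hy⟩ := psi.surjective ⟨(-p).val, hlt⟩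
  rw [← hy] at hx
  constructor
  · intro h
    rcases y with i | j
    · exact absurd ⟨i, by rw [hx]; ring⟩ h
    · exact ⟨j, by rw [hx]; ring⟩
  · rintro ⟨j, hj⟩ ⟨i, hi⟩
    have := inj (psi (Sum.inl i)) (psi (Sum.inr j)) (by linear_combination -hi - hj)
    simpa using psi.injective this

theorem pairW_single {R : Type*} [CommRing R] {N : ℕ} [NeZero N] (w : ZMod N → Bool)
    (g : WSp R N) : pairW (Finsupp.single w 1) g = g w := by
  unfold pairW
  rw [Finset.sum_eq_single w]
  · simp
  · intro b _ hb
    rw [Finsupp.single_eq_of_ne hb, zero_mul]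
  · simp

theorem sUOp_dual {R : Type*} [CommRing R] [IsDomain R] [Infinite R] (q : R) (n k : ℕ)
    (hn : 1 ≤ n) (hk : 1 ≤ k) [NeZero (n + k)]
    (hN : 3 ≤ n + k) (lam : Fin k → ℕ) (ha : Antitone lam) (hb : ∀ i, lam i ≤ n) :
    sUOp R (n + k) q lam = Phi R (n + k) (sUOp R (n + k) q (transpGen lam n)) := by
  have hp : padded (transpGen lam n) 0 =
      (Finset.univ.filter fun i' : Fin k => 1 ≤ lam i').card := by
    unfold padded
    rw [dif_pos (by omega)]
    rfl
  have hp2 : padded lam 0 = lam ⟨0, by omega⟩ := by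
    unfold padded
    rw [dif_pos (by omega)]
  have hak : padded (transpGen lam n) 0 ≤ k := by
    rw [hp]; exact (Finset.card_le_univ _).trans (by simp)
  have hbn : padded lam 0 ≤ n := by rw [hp2]; exact hb _
  unfold sUOp
  generalize hA : padded (transpGen lam n) 0 = a at *
  generalize hB : padded lam 0 = b at *
  have := op_jt R (n + k) q hN a b (by omega) (fun i => lam (Fin.castLE hak i))
    (fun i j h => ha (by simpa using h)) (fun i => by
      rw [hp2]; exact ha (by simp [Fin.le_def]))
  simp only [transp_transp n a lam ha hb hak]
  rw [← this]
  simp only [transp_restrict a b lam hak (fun i hi => by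
    rw [hp]; exact (lt_card_iff lam ha 1 i).mpr hi)]

end Words

/-- Level-rank duality: for `λ, μ, ρ ∈ 𝔓_{≤k,n}`,
`⟨w(ρ), s_λ(𝒰)·w(μ)⟩_{F_k} = ⟨w(ρ^t), s_{λ^t}(𝒰)·w(μ^t)⟩_{F_n}` in `ℂ[q]`. -/
theorem level_rank_duality (n k : ℕ) (hn : 1 ≤ n) (hk : 1 ≤ k) [NeZero (n + k)]
    (hN : 3 ≤ n + k) (lam mu rho : PartBox k n) :
    pairW (Finsupp.single (wordOf (n + k) k (partVal rho)) 1)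
        (sUOp (Polynomial ℂ) (n + k) Polynomial.X (partVal lam)
          (Finsupp.single (wordOf (n + k) k (partVal mu)) 1)) =
      pairW (Finsupp.single (wordOf (n + k) n (transpGen (partVal rho) n)) 1)
        (sUOp (Polynomial ℂ) (n + k) Polynomial.X (transpGen (partVal lam) n)
          (Finsupp.single (wordOf (n + k) n (transpGen (partVal mu) n)) 1)) := by
  rw [pairW_single, pairW_single,
    sUOp_dual Polynomial.X n k hn hk hN (partVal lam) (partVal_anti lam) (partVal_le lam),
    Phi_apply, theta_word n k (partVal mu) (partVal_anti mu) (partVal_le mu),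
    ← theta_word n k (partVal rho) (partVal_anti rho) (partVal_le rho)]
  rfl
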